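/- arXiv:2102.00285 — 3 statements merged into one kernel-verified Lean document; each statement's English description precedes it below -/
import Mathlib

section
/- Let F be a free group with basis X, and let r be a cyclically reduced element of F that contains a basis element x ∈ X. Then the subgroup of F/⟨⟨r⟩⟩ generated by the images of X \ {x} is free on those images; equivalently, the free group on X \ {x} embeds canonically into F/⟨⟨r⟩⟩. -/
/-- An element of a free group is cyclically reduced if the first and last letters of its
reduced word are not inverse to each other. -/
def CyclicallyReduced {X : Type} [DecidableEq X] (r : FreeGroup X) : Prop :=
  ∀ (x : X) (b : Bool), r.toWord.head? = some (x, b) → r.toWord.getLast? ≠ some (x, !b)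

/-!
Magnus' induction on the length of `r`, with HNN extensions in place of amalgamated products.

Suppose first that the exponent sum of `x` in `r` is zero. Then `r` lies in the kernel of the
exponent sum, which is free on the conjugates `yᵢ = xⁱ y x⁻ⁱ` with `y ≠ x`, and as a word `s` in
the `yᵢ` it is shorter, since the letters `x` have disappeared. Choose a letter `d` that occurs in
`s`, and let `m`, `M` be the extreme indices with which it does. By induction, omitting `d_M` or
`d_m` leaves a family which is still free modulo `s`, so the shift `yᵢ ↦ yᵢ₊₁` is an isomorphism
between two subgroups of the one-relator group of `s`, and the latter embeds into an HNN extension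
whose stable letter induces the shift. The one-relator group of `r` maps to this extension, which
reduces the theorem for `r` to the theorem for `s`.

If the exponent sum `α` of `x` is nonzero and another letter `b` occurs in `r`, with exponent sum
`β`, then `r` has weight zero for the weights `α` on `b` and `-β` on `x`, and the same argument
works with `b` as the stable letter; that `b` generates only a subgroup of index `|α|` in the group
of weights is absorbed by a division with remainder.
-/

universe u

namespace Magnus

open SemidirectProduct

variable {X : Type*}

section LetterSubgroup

/-- The subgroup of a free group generated by a set `S` of basis elements; for `S ≠ X` these are
known as Magnus subgroups. -/
def letterSubgroup (S : Set X) : Subgroup (FreeGroup X) :=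
  Subgroup.closure (FreeGroup.of '' S)

lemma of_mem_letterSubgroup {S : Set X} {y : X} (h : y ∈ S) :
    FreeGroup.of y ∈ letterSubgroup S :=
  Subgroup.subset_closure ⟨y, h, rfl⟩

lemma letterSubgroup_mono {S T : Set X} (h : S ⊆ T) : letterSubgroup S ≤ letterSubgroup T :=
  Subgroup.closure_mono (Set.image_mono h)

lemma letterSubgroup_le_iff {S : Set X} {K : Subgroup (FreeGroup X)} :
    letterSubgroup S ≤ K ↔ ∀ y ∈ S, FreeGroup.of y ∈ K := by
  rw [letterSubgroup, Subgroup.closure_le, Set.image_subset_iff]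
  rfl

lemma map_mem_of_mem_letterSubgroup {G : Type*} [Group G] {S : Set X} (f : FreeGroup X →* G)
    {K : Subgroup G} (h : ∀ y ∈ S, f (FreeGroup.of y) ∈ K) {u : FreeGroup X}
    (hu : u ∈ letterSubgroup S) : f u ∈ K :=
  letterSubgroup_le_iff (K := K.comap f).2 h hu

lemma eq_of_mem_letterSubgroup {G : Type*} [Group G] {S : Set X} {f g : FreeGroup X →* G}
    (h : ∀ y ∈ S, f (FreeGroup.of y) = g (FreeGroup.of y)) {u : FreeGroup X}
    (hu : u ∈ letterSubgroup S) : f u = g u :=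
  letterSubgroup_le_iff (K := f.eqLocus g).2 h hu

lemma map_mem_letterSubgroup {ι : Type*} {S : Set X} {f : ι → X} (h : ∀ i, f i ∈ S)
    (v : FreeGroup ι) : FreeGroup.map f v ∈ letterSubgroup S := by
  have hrange : (FreeGroup.map f).range ≤ letterSubgroup S := by
    rw [FreeGroup.range_map]
    exact Subgroup.closure_mono (Set.image_mono (Set.range_subset_iff.2 h))
  exact hrange ⟨v, rfl⟩

end LetterSubgroup

section Letters

variable [DecidableEq X]

/-- The basis elements occurring, with exponent `1` or `-1`, in the reduced word of `g`. -/
def letters (g : FreeGroup X) : Finset X :=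
  (g.toWord.map Prod.fst).toFinset

lemma mem_letters {g : FreeGroup X} {y : X} : y ∈ letters g ↔ ∃ c, (y, c) ∈ g.toWord := by
  simp [letters]

lemma letters_of (y : X) : letters (FreeGroup.of y) = {y} := by
  simp [letters]

lemma letters_one : letters (1 : FreeGroup X) = ∅ := by
  simp [letters]

lemma letters_inv (g : FreeGroup X) : letters g⁻¹ = letters g := by
  simp [letters, FreeGroup.invRev, Function.comp_def]

lemma letters_mul_subset (g h : FreeGroup X) : letters (g * h) ⊆ letters g ∪ letters h := by
  intro y
  simp only [Finset.mem_union, mem_letters, ← exists_or, ← List.mem_append]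
  exact fun ⟨c, hc⟩ => ⟨c, (FreeGroup.toWord_mul_sublist g h).subset hc⟩

lemma mem_letterSubgroup_iff {g : FreeGroup X} {S : Set X} :
    g ∈ letterSubgroup S ↔ ∀ y ∈ letters g, y ∈ S := by
  constructor
  · intro hg
    induction hg using Subgroup.closure_induction with
    | mem _ h =>
      obtain ⟨y, hy, rfl⟩ := h
      simpa [letters_of] using hy
    | one => simp [letters_one]
    | mul g h _ _ ihg ihh =>
      exact fun y hy => (Finset.mem_union.1 (letters_mul_subset g h hy)).elim (ihg y) (ihh y)
    | inv g _ ih => rwa [letters_inv]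
  · intro hg
    have hprod := FreeGroup.lift_mk (f := FreeGroup.of) (L := g.toWord)
    rw [FreeGroup.mk_toWord, FreeGroup.lift_of_eq_id, MonoidHom.id_apply] at hprod
    rw [hprod]
    refine list_prod_mem fun v hv => ?_
    obtain ⟨⟨y, c⟩, hyc, rfl⟩ := List.mem_map.1 hv
    have hy := of_mem_letterSubgroup (hg y (mem_letters.2 ⟨c, hyc⟩))
    cases c
    exacts [inv_mem hy, hy]

lemma countP_ne_lt_norm {g : FreeGroup X} {b : X} (hb : b ∈ letters g) :
    g.toWord.countP (·.1 ≠ b) < g.norm := by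
  obtain ⟨c, hc⟩ := mem_letters.1 hb
  refine List.countP_le_length.lt_of_ne fun heq => ?_
  simpa using List.countP_eq_length.1 heq _ hc

lemma lt_norm_of_subadditive {N : FreeGroup X → ℕ} {b : X} (one : N 1 = 0)
    (mul : ∀ g h, N (g * h) ≤ N g + N h) (inv : ∀ g, N g⁻¹ ≤ N g)
    (of_self : N (FreeGroup.of b) = 0) (of_le : ∀ y, N (FreeGroup.of y) ≤ 1)
    {g : FreeGroup X} (hb : b ∈ letters g) : N g < g.norm := by
  have letter (y : X) (c : Bool) : N (FreeGroup.mk [(y, c)]) ≤ if y ≠ b then 1 else 0 := by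
    have hy : N (FreeGroup.of y) ≤ if y ≠ b then 1 else 0 := by
      split_ifs with h
      · exact of_le y
      · rw [not_not.1 h, of_self]
    cases c
    exacts [(inv (FreeGroup.of y)).trans hy, hy]
  have word (L : List (X × Bool)) : N (FreeGroup.mk L) ≤ L.countP (·.1 ≠ b) := by
    induction L with
    | nil => exact one.le
    | cons p L ih =>
      rw [← List.singleton_append, ← FreeGroup.mul_mk, List.countP_append, List.countP_singleton]
      refine (mul _ _).trans (add_le_add ?_ ih)
      simpa using letter p.1 p.2
  simpa only [FreeGroup.mk_toWord] using (word g.toWord).trans_lt (countP_ne_lt_norm hb)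

end Letters

section EssentiallyInvolves

/-- No conjugate of `r` lies in the subgroup generated by the basis elements other than `x`. This
is the conjugation-invariant form of the hypothesis of the Freiheitssatz, in which form it survives
the induction. -/
def EssentiallyInvolves (r : FreeGroup X) (x : X) : Prop :=
  ∀ r', IsConj r r' → r' ∉ letterSubgroup {x}ᶜ

variable [DecidableEq X]

lemma EssentiallyInvolves.mem_letters {r : FreeGroup X} {x : X} (h : EssentiallyInvolves r x) :
    x ∈ letters r := by
  by_contra hx
  exact h r (IsConj.refl r) (mem_letterSubgroup_iff.2 fun y hy hyx => hx (hyx ▸ hy))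

/-- The retraction of the free group onto the subgroup generated by the basis elements other than
`b`. -/
def kill (b : X) : FreeGroup X →* FreeGroup X :=
  FreeGroup.lift fun y => if y = b then 1 else FreeGroup.of y

lemma kill_of_mem {b : X} {u : FreeGroup X} (hu : u ∈ letterSubgroup {b}ᶜ) : kill b u = u :=
  eq_of_mem_letterSubgroup (g := MonoidHom.id _) (fun y (hy : y ≠ b) => by simp [kill, hy]) hu

lemma norm_kill_lt {b : X} {g : FreeGroup X} (hb : b ∈ letters g) : (kill b g).norm < g.norm := by
  refine lt_norm_of_subadditive (N := fun g => (kill b g).norm) (by simp) (fun g h => ?_)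
    (fun g => ?_) (by simp [kill]) (fun y => ?_) hb
  · simpa only [map_mul] using FreeGroup.norm_mul_le _ _
  · rw [map_inv, FreeGroup.norm_inv_eq]
  · by_cases hy : y = b <;> simp [kill, hy]

lemma isConj_kill_of_not_essentiallyInvolves {s : FreeGroup X} {y : X}
    (h : ¬ EssentiallyInvolves s y) : IsConj s (kill y s) := by
  simp only [EssentiallyInvolves, not_forall, not_not] at h
  obtain ⟨r', hconj, hr'⟩ := h
  have hkill := (kill y).map_isConj hconj
  rw [kill_of_mem hr'] at hkill
  exact hconj.trans hkill.symm

lemma essentiallyInvolves_of_norm_le {s : FreeGroup X}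
    (hmin : ∀ s', IsConj s s' → s.norm ≤ s'.norm) {y : X} (hy : y ∈ letters s) :
    EssentiallyInvolves s y := by
  by_contra h
  exact (hmin _ (isConj_kill_of_not_essentiallyInvolves h)).not_gt (norm_kill_lt hy)

lemma exists_isConj_forall_essentiallyInvolves (s : FreeGroup X) :
    ∃ s', IsConj s s' ∧ s'.norm ≤ s.norm ∧ ∀ y ∈ letters s', EssentiallyInvolves s' y := by
  obtain ⟨s', hs', hmin⟩ := WellFounded.has_min
    (InvImage.wf FreeGroup.norm (Nat.lt_wfRel.wf)) {s' | IsConj s s'} ⟨s, IsConj.refl s⟩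
  have hmin' (t : FreeGroup X) (ht : IsConj s t) : s'.norm ≤ t.norm := not_lt.1 (hmin t ht)
  exact ⟨s', hs', hmin' s (IsConj.refl s),
    fun _ => essentiallyInvolves_of_norm_le fun t ht => hmin' t (hs'.trans ht)⟩

lemma norm_pow_of_isCyclicallyReduced {r : FreeGroup X}
    (hr : FreeGroup.IsCyclicallyReduced r.toWord) (n : ℕ) : (r ^ n).norm = n * r.norm := by
  rw [FreeGroup.norm, FreeGroup.toWord_pow, (hr.flatten_replicate n).isReduced.reduce_eq]
  simp [FreeGroup.norm]

/- Conjugation changes the length of `rⁿ` by a bounded amount, whereas the length of `rⁿ` is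
`n` times that of `r`. -/
lemma norm_le_of_isConj {r r' : FreeGroup X} (hr : FreeGroup.IsCyclicallyReduced r.toWord)
    (h : IsConj r r') : r.norm ≤ r'.norm := by
  obtain ⟨g, hg⟩ := isConj_iff.1 h.symm
  have norm_pow_le (n : ℕ) : (r' ^ n).norm ≤ n * r'.norm := by
    induction n with
    | zero => simp
    | succ n ih =>
      rw [pow_succ, Nat.succ_mul]
      exact (FreeGroup.norm_mul_le _ _).trans (Nat.add_le_add_right ih _)
  have key (n : ℕ) : n * r.norm ≤ n * r'.norm + 2 * g.norm := by
    calc n * r.norm = (g * r' ^ n * g⁻¹).norm := by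
          rw [← norm_pow_of_isCyclicallyReduced hr, ← hg, conj_pow]
      _ ≤ (g * r' ^ n).norm + g⁻¹.norm := FreeGroup.norm_mul_le _ _
      _ ≤ g.norm + (r' ^ n).norm + g.norm := by
          rw [FreeGroup.norm_inv_eq]
          exact Nat.add_le_add_right (FreeGroup.norm_mul_le _ _) _
      _ ≤ n * r'.norm + 2 * g.norm := by linarith [norm_pow_le n]
  by_contra! hlt
  nlinarith [key (2 * g.norm + 1)]

lemma essentiallyInvolves_of_isCyclicallyReduced {r : FreeGroup X}
    (hr : FreeGroup.IsCyclicallyReduced r.toWord) {x : X} (hx : x ∈ letters r) :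
    EssentiallyInvolves r x :=
  essentiallyInvolves_of_norm_le (fun _ => norm_le_of_isConj hr) hx

end EssentiallyInvolves

section Freiheit

/-- The conclusion of the Freiheitssatz for the relator `r` and the basis element `x`: the basis
elements other than `x` satisfy no relation modulo `r`. -/
def Freiheit (r : FreeGroup X) (x : X) : Prop :=
  Disjoint (letterSubgroup {x}ᶜ) (Subgroup.normalClosure {r})

lemma Freiheit.injective_mk_comp_map {r : FreeGroup X} {x : X} (h : Freiheit r x) {ι : Type*}
    {f : ι → X} (hf : Function.Injective f) (hx : ∀ i, f i ≠ x) :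
    Function.Injective
      ((QuotientGroup.mk' (Subgroup.normalClosure {r})).comp (FreeGroup.map f)) := by
  refine (injective_iff_map_eq_one _).2 fun v hv => FreeGroup.map_injective hf ?_
  rw [_root_.map_one]
  exact Subgroup.disjoint_def.1 h (map_mem_letterSubgroup hx v) ((QuotientGroup.eq_one_iff _).1 hv)

lemma freiheit_of_kill_eq_one [DecidableEq X] {r : FreeGroup X} {x : X} (h : kill x r = 1) :
    Freiheit r x := by
  have hker : Subgroup.normalClosure {r} ≤ (kill x).ker :=
    Subgroup.normalClosure_le_normal (Set.singleton_subset_iff.2 h)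
  exact Subgroup.disjoint_def.2 fun hu hur => (kill_of_mem hu).symm.trans (hker hur)

end Freiheit

section HNN

lemma normalClosure_singleton_eq_of_isConj {G : Type*} [Group G] {a b : G} (h : IsConj a b) :
    Subgroup.normalClosure {a} = Subgroup.normalClosure {b} := by
  simp [Subgroup.normalClosure, Group.conjugatesOfSet, h.conjugatesOf_eq]

lemma exists_embedding_conj_eq {A : Type*} {H : Type u} [Group A] [Group H] {f₁ f₂ : A →* H}
    (h₁ : Function.Injective f₁) (h₂ : Function.Injective f₂) :
    ∃ (G : Type u) (_ : Group G) (ι : H →* G) (t : G), Function.Injective ι ∧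
      ∀ a, ι (f₂ a) = t * ι (f₁ a) * t⁻¹ := by
  let e₁ := MonoidHom.ofInjective h₁
  let e₂ := MonoidHom.ofInjective h₂
  let φ : f₁.range ≃* f₂.range := e₁.symm.trans e₂
  refine ⟨HNNExtension H _ _ φ, inferInstance, HNNExtension.of, HNNExtension.t,
    HNNExtension.of_injective φ, fun a => ?_⟩
  have hφ : φ (e₁ a) = e₂ a := by simp [φ]
  have hconj := HNNExtension.equiv_eq_conj (φ := φ) (e₁ a)
  rwa [hφ] at hconj

lemma exists_semidirectProduct_hom {N G : Type*} [Group N] [Group G]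
    {σ : Multiplicative ℤ →* MulAut N} {P : N →* G} {t : G}
    (h : ∀ v, P (σ (Multiplicative.ofAdd 1) v) = t * P v * t⁻¹) :
    ∃ Q : N ⋊[σ] Multiplicative ℤ →* G, ∀ v, Q (inl v) = P v := by
  have conj_zpow (n : ℤ) : ∀ v, P (σ (Multiplicative.ofAdd n) v) = t ^ n * P v * (t ^ n)⁻¹ := by
    induction n with
    | zero => simp
    | succ n ih =>
      intro v
      rw [ofAdd_add, _root_.map_mul, MulAut.mul_apply, ih, h]
      group
    | pred n ih =>
      intro v
      have hv := ih v
      rw [← sub_add_cancel (-(n : ℤ)) 1, add_comm, ofAdd_add, _root_.map_mul, MulAut.mul_apply, h,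
        mul_inv_eq_iff_eq_mul, ← eq_inv_mul_iff_mul_eq] at hv
      rw [hv]
      group
  exact ⟨SemidirectProduct.lift P (zpowersHom G t) fun n => MonoidHom.ext (conj_zpow n.toAdd),
    fun v => lift_inl _ _ _ v⟩

end HNN

section Shift

/-- The action of `ℤ` on the free group with basis `X × ℤ` by translation of the indices. -/
def shift : Multiplicative ℤ →* MulAut (FreeGroup (X × ℤ)) where
  toFun k := FreeGroup.freeGroupCongr ((Equiv.refl X).prodCongr (Equiv.addRight k.toAdd))
  map_one' := MulEquiv.toMonoidHom_injective (by ext p; simp)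
  map_mul' k l := MulEquiv.toMonoidHom_injective <| by
    ext ⟨y, i⟩
    simp [add_assoc, add_comm l.toAdd]

lemma shift_of (k : Multiplicative ℤ) (p : X × ℤ) :
    shift k (FreeGroup.of p) = FreeGroup.of (p.1, p.2 + k.toAdd) :=
  FreeGroup.map.of

lemma shift_mem_letterSubgroup {S T : Set (X × ℤ)} {k : Multiplicative ℤ}
    (h : ∀ p ∈ S, (p.1, p.2 + k.toAdd) ∈ T) {v : FreeGroup (X × ℤ)} (hv : v ∈ letterSubgroup S) :
    shift k v ∈ letterSubgroup T :=
  map_mem_of_mem_letterSubgroup (shift k).toMonoidHom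
    (fun p hp => by simpa [shift_of] using of_mem_letterSubgroup (h p hp)) hv

lemma norm_shift_le [DecidableEq X] (k : Multiplicative ℤ) (g : FreeGroup (X × ℤ)) :
    (shift k g).norm ≤ g.norm := by
  change (FreeGroup.map _ g).norm ≤ _
  conv_lhs => rw [← FreeGroup.mk_toWord (x := g), FreeGroup.map.mk]
  refine FreeGroup.norm_mk_le.trans_eq ?_
  simp [FreeGroup.norm]

/-- The basis elements whose index lies between `m` and `M` if their letter is `d`. -/
def window (d : X) (m M : ℤ) : Set (X × ℤ) :=
  {p | p.1 = d → p.2 ∈ Set.Icc m M}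

lemma exists_window [DecidableEq X] {s : FreeGroup (X × ℤ)} {d : X} {i : ℤ}
    (h : (d, i) ∈ letters s) : ∃ m M : ℤ, i ∈ Set.Icc m M ∧ (d, m) ∈ letters s ∧
      (d, M) ∈ letters s ∧ s ∈ letterSubgroup (window d m M) := by
  let I : Finset ℤ := {p ∈ letters s | p.1 = d}.image Prod.snd
  have mem_I {j : ℤ} : j ∈ I ↔ (d, j) ∈ letters s := by simp [I]
  have hI : I.Nonempty := ⟨i, mem_I.2 h⟩
  refine ⟨I.min' hI, I.max' hI, ⟨I.min'_le _ (mem_I.2 h), I.le_max' _ (mem_I.2 h)⟩,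
    mem_I.1 (I.min'_mem _), mem_I.1 (I.max'_mem _), mem_letterSubgroup_iff.2 ?_⟩
  rintro ⟨_, j⟩ hj rfl
  exact ⟨I.min'_le _ (mem_I.2 hj), I.le_max' _ (mem_I.2 hj)⟩

lemma exists_shift_equivariant_extension {G : Type*} [Group G] (f : FreeGroup (X × ℤ) →* G)
    (t : G) (d : X) (m M : ℤ)
    (hf : ∀ p ∈ window d m (M - 1),
      f (FreeGroup.of (p.1, p.2 + 1)) = t * f (FreeGroup.of p) * t⁻¹) :
    ∃ P : FreeGroup (X × ℤ) →* G,
      (∀ v, P (shift (Multiplicative.ofAdd 1) v) = t * P v * t⁻¹) ∧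
      ∀ v ∈ letterSubgroup (window d m M), P v = f v := by
  classical
  let P : FreeGroup (X × ℤ) →* G := FreeGroup.lift fun p =>
    if p.1 = d then t ^ (p.2 - m) * f (FreeGroup.of (d, m)) * (t ^ (p.2 - m))⁻¹
    else f (FreeGroup.of p)
  have P_of_eq (i : ℤ) : P (FreeGroup.of (d, i)) =
      t ^ (i - m) * f (FreeGroup.of (d, m)) * (t ^ (i - m))⁻¹ := by simp [P]
  have P_of_ne {c : X} (i : ℤ) (hc : c ≠ d) :
      P (FreeGroup.of (c, i)) = f (FreeGroup.of (c, i)) := by simp [P, hc]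
  have P_of_succ (p : X × ℤ) :
      P (FreeGroup.of (p.1, p.2 + 1)) = t * P (FreeGroup.of p) * t⁻¹ := by
    obtain ⟨c, i⟩ := p
    by_cases hc : c = d
    · simp only [hc, P_of_eq]
      rw [show i + 1 - m = 1 + (i - m) by ring]
      group
    · simpa only [P_of_ne _ hc] using hf (c, i) fun h => absurd h hc
  have P_of_window (n : ℕ) (hn : m + n ≤ M) :
      P (FreeGroup.of (d, m + n)) = f (FreeGroup.of (d, m + n)) := by
    induction n with
    | zero => simp [P_of_eq]
    | succ n ih =>
      have hfn := hf (d, m + n) fun _ => ⟨show m ≤ m + n by lia, show m + n ≤ M - 1 by lia⟩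
      rw [Nat.cast_succ, ← add_assoc, P_of_succ (d, m + n), ih (by lia), hfn]
  refine ⟨P, fun v => ?_, fun v hv => eq_of_mem_letterSubgroup ?_ hv⟩
  · have hcomp : P.comp (shift (Multiplicative.ofAdd 1)).toMonoidHom =
        (MulAut.conj t).toMonoidHom.comp P := by
      ext p
      simpa [shift_of] using P_of_succ p
    exact DFunLike.congr_fun hcomp v
  · rintro ⟨c, i⟩ hi
    by_cases hc : c = d
    · subst hc
      obtain ⟨n, rfl⟩ := Int.le.dest (hi rfl).1
      exact P_of_window n (hi rfl).2
    · exact P_of_ne i hc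

theorem mem_normalClosure_of_inl_mem {s u : FreeGroup (X × ℤ)} {d : X} {m M : ℤ}
    (hs : s ∈ letterSubgroup (window d m M)) (hm : Freiheit s (d, m)) (hM : Freiheit s (d, M))
    (hu : u ∈ letterSubgroup (window d m M))
    (h : (inl u : FreeGroup (X × ℤ) ⋊[shift] Multiplicative ℤ) ∈
      Subgroup.normalClosure {inl s}) :
    u ∈ Subgroup.normalClosure {s} := by
  let q := QuotientGroup.mk' (Subgroup.normalClosure {s})
  have hq {v : FreeGroup (X × ℤ)} : q v = 1 ↔ v ∈ Subgroup.normalClosure {s} :=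
    QuotientGroup.eq_one_iff v
  let V := window d m (M - 1)
  let next : V → X × ℤ := fun p => (p.1.1, p.1.2 + 1)
  have next_injective : Function.Injective next := by
    rintro ⟨⟨c, i⟩, _⟩ ⟨⟨c', i'⟩, _⟩ h
    simpa [next] using h
  have val_ne (p : V) : p.1 ≠ (d, M) := by
    obtain ⟨p, hp⟩ := p
    rintro rfl
    have : M ≤ M - 1 := (hp rfl).2
    lia
  have next_ne (p : V) : next p ≠ (d, m) := by
    obtain ⟨⟨c, i⟩, hp⟩ := p
    intro h
    obtain ⟨hc, hi⟩ := Prod.mk.inj h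
    exact (lt_add_one i).not_ge (hi.trans_le (hp hc).1)
  obtain ⟨G, _, ι, t, hι, ht⟩ := exists_embedding_conj_eq
    (hM.injective_mk_comp_map Subtype.val_injective val_ne)
    (hm.injective_mk_comp_map next_injective next_ne)
  obtain ⟨P, hPshift, hP⟩ := exists_shift_equivariant_extension (ι.comp q) t d m M
    fun p hp => ht (FreeGroup.of ⟨p, hp⟩)
  obtain ⟨Q, hQ⟩ := exists_semidirectProduct_hom hPshift
  have hker : Subgroup.normalClosure {inl s} ≤ Q.ker := by
    refine Subgroup.normalClosure_le_normal (Set.singleton_subset_iff.2 ?_)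
    change Q (inl s) = 1
    rw [hQ, hP s hs, MonoidHom.comp_apply, hq.2 (Subgroup.subset_normalClosure rfl),
      _root_.map_one]
  have hιq : ι (q u) = 1 := by
    rw [← MonoidHom.comp_apply, ← hP u hu, ← hQ]
    exact hker h
  exact hq.1 ((map_eq_one_iff ι hι).1 hιq)

end Shift

section Rewriting

/-- The homomorphism to `ℤ` with prescribed values on the basis. -/
def weight (w : X → ℤ) : FreeGroup X →* Multiplicative ℤ :=
  FreeGroup.lift fun y => Multiplicative.ofAdd (w y)

@[simp]
lemma weight_of (w : X → ℤ) (y : X) : weight w (FreeGroup.of y) = Multiplicative.ofAdd (w y) :=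
  FreeGroup.lift_apply_of

lemma weight_smul_add_smul (α β : ℤ) (v w : X → ℤ) :
    weight (α • v + β • w) = weight v ^ α * weight w ^ β := by
  ext y
  simp [mul_comm]

variable {b : X} {w : X → ℤ}

lemma weight_eq_one_of_mem_normalClosure {r u : FreeGroup X} (hr : weight w r = 1)
    (hu : u ∈ Subgroup.normalClosure {r}) : weight w u = 1 :=
  Subgroup.normalClosure_le_normal (N := (weight w).ker) (Set.singleton_subset_iff.2 hr) hu

/-- Left inverse to the rewriting process on elements of weight zero. When the weight of `b` is not
`±1` there need not be a power of `b` of weight `i`; the exponent is then the integer quotient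
of `i` by `w b`. -/
def unrewriting (b : X) (w : X → ℤ) : FreeGroup (X × ℤ) →* FreeGroup X :=
  FreeGroup.lift fun p =>
    FreeGroup.of b ^ (p.2 / w b) * FreeGroup.of p.1 * (FreeGroup.of b ^ ((p.2 + w p.1) / w b))⁻¹

lemma unrewriting_of (b : X) (w : X → ℤ) (p : X × ℤ) : unrewriting b w (FreeGroup.of p) =
    FreeGroup.of b ^ (p.2 / w b) * FreeGroup.of p.1 * (FreeGroup.of b ^ ((p.2 + w p.1) / w b))⁻¹ :=
  FreeGroup.lift_apply_of

lemma unrewriting_mem_of_fst_ne {x : X} (hbx : b ≠ x) {s : FreeGroup (X × ℤ)}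
    (hs : s ∈ letterSubgroup {p : X × ℤ | p.1 ≠ x}) :
    unrewriting b w s ∈ letterSubgroup {x}ᶜ := by
  refine map_mem_of_mem_letterSubgroup (unrewriting b w) (fun p hp => ?_) hs
  have hb : FreeGroup.of b ∈ letterSubgroup {x}ᶜ := of_mem_letterSubgroup hbx
  have hp : FreeGroup.of p.1 ∈ letterSubgroup {x}ᶜ := of_mem_letterSubgroup hp
  rw [unrewriting_of]
  exact mul_mem (mul_mem (zpow_mem hb _) hp) (inv_mem (zpow_mem hb _))

variable [DecidableEq X]

/-- Magnus' rewriting process with stable letter `b`. With `b ^ ρ` standing for a power of `b` of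
weight `ρ`, real or formal, the basis element `(y, i)` is `b ^ i * y * b ^ (-(i + w y))`, and the
integer component records the weight. -/
def rewriting (b : X) (w : X → ℤ) : FreeGroup X →* FreeGroup (X × ℤ) ⋊[shift] Multiplicative ℤ :=
  FreeGroup.lift fun y => ⟨if y = b then 1 else FreeGroup.of (y, 0), Multiplicative.ofAdd (w y)⟩

lemma rewriting_of (b : X) (w : X → ℤ) (y : X) : rewriting b w (FreeGroup.of y) =
    ⟨if y = b then 1 else FreeGroup.of (y, 0), Multiplicative.ofAdd (w y)⟩ :=
  FreeGroup.lift_apply_of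

lemma rewriting_right (b : X) (w : X → ℤ) (g : FreeGroup X) :
    (rewriting b w g).right = weight w g := by
  have hcomp : rightHom.comp (rewriting b w) = weight w := by
    ext y
    simp [rewriting_of]
  exact DFunLike.congr_fun hcomp g

lemma rewriting_mul_left (b : X) (w : X → ℤ) (g h : FreeGroup X) :
    (rewriting b w (g * h)).left =
      (rewriting b w g).left * shift (weight w g) (rewriting b w h).left := by
  rw [_root_.map_mul, mul_left, rewriting_right]

lemma rewriting_inv_left (b : X) (w : X → ℤ) (g : FreeGroup X) :
    (rewriting b w g⁻¹).left = shift (weight w g)⁻¹ (rewriting b w g).left⁻¹ := by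
  rw [map_inv, inv_left, rewriting_right]

lemma inl_rewriting_left {g : FreeGroup X} (hg : weight w g = 1) :
    inl (rewriting b w g).left = rewriting b w g := by
  ext
  · rfl
  · rw [rewriting_right, hg, right_inl]

lemma norm_rewriting_left_lt {g : FreeGroup X} (hb : b ∈ letters g) :
    (rewriting b w g).left.norm < g.norm := by
  refine lt_norm_of_subadditive (N := fun g => (rewriting b w g).left.norm) (by simp)
    (fun g h => ?_) (fun g => ?_) (by simp [rewriting_of]) (fun y => ?_) hb
  · rw [rewriting_mul_left]
    exact (FreeGroup.norm_mul_le _ _).trans (Nat.add_le_add_left (norm_shift_le _ _) _)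
  · rw [rewriting_inv_left, ← FreeGroup.norm_inv_eq (x := (rewriting b w g).left)]
    exact norm_shift_le _ _
  · by_cases hy : y = b <;> simp [rewriting_of, hy]

lemma unrewriting_shift_rewriting_of (hb : w b ≠ 0) (y : X) (k : Multiplicative ℤ) :
    unrewriting b w (shift k (rewriting b w (FreeGroup.of y)).left) =
      FreeGroup.of b ^ (k.toAdd / w b) * FreeGroup.of y *
        (FreeGroup.of b ^ ((k.toAdd + w y) / w b))⁻¹ := by
  by_cases hy : y = b
  · have hdiv : (k.toAdd + w b) / w b = k.toAdd / w b + 1 := by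
      rw [Int.add_ediv_of_dvd_right dvd_rfl, Int.ediv_self hb]
    simp [rewriting_of, hy, hdiv, zpow_add]
  · simp [rewriting_of, hy, shift_of, unrewriting_of]

lemma unrewriting_shift_rewriting (hb : w b ≠ 0) (g : FreeGroup X) (k : Multiplicative ℤ) :
    unrewriting b w (shift k (rewriting b w g).left) =
      FreeGroup.of b ^ (k.toAdd / w b) * g *
        (FreeGroup.of b ^ ((k * weight w g).toAdd / w b))⁻¹ := by
  induction g using FreeGroup.induction_on generalizing k with
  | C1 => simp
  | of y => simpa using unrewriting_shift_rewriting_of hb y k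
  | inv_of y ih =>
    rw [rewriting_inv_left, ← MulAut.mul_apply, ← _root_.map_mul, map_inv, map_inv, ih]
    simp [mul_assoc]
  | mul g h ihg ihh =>
    rw [rewriting_mul_left, _root_.map_mul, _root_.map_mul, ihg, ← MulAut.mul_apply,
      ← _root_.map_mul, ihh, (weight w).map_mul, mul_assoc k]
    group

lemma unrewriting_rewriting_left (hb : w b ≠ 0) {g : FreeGroup X} (hg : weight w g = 1) :
    unrewriting b w (rewriting b w g).left = g := by
  simpa [hg] using unrewriting_shift_rewriting hb g 1

lemma isConj_unrewriting (hb : w b ≠ 0) {r : FreeGroup X} (hr : weight w r = 1)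
    {s : FreeGroup (X × ℤ)} (hs : IsConj (rewriting b w r).left s) :
    IsConj r (unrewriting b w s) := by
  simpa only [unrewriting_rewriting_left hb hr] using (unrewriting b w).map_isConj hs

lemma inl_shift_rewriting_left_mem {r u : FreeGroup X} (hr : weight w r = 1)
    {s : FreeGroup (X × ℤ)} (hs : IsConj (rewriting b w r).left s)
    (hu : u ∈ Subgroup.normalClosure {r}) (k : Multiplicative ℤ) :
    (inl (shift k (rewriting b w u).left) : FreeGroup (X × ℤ) ⋊[shift] Multiplicative ℤ) ∈
      Subgroup.normalClosure {inl s} := by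
  have hmap := Subgroup.map_normalClosure_le {r} (rewriting b w) ⟨u, hu, rfl⟩
  rw [Set.image_singleton, ← inl_rewriting_left hr,
    normalClosure_singleton_eq_of_isConj (MonoidHom.map_isConj inl hs),
    ← inl_rewriting_left (weight_eq_one_of_mem_normalClosure hr hu)] at hmap
  rw [inl_aut, map_inv]
  exact Subgroup.normalClosure_normal.conj_mem _ hmap _

/- Meeting the letter `d` only at an index between its extreme ones in `s` lets the relation descend
to the base of the HNN extension, where omitting `e` makes the Freiheitssatz for `s` apply. -/
lemma freiheit_of_rewriting {r : FreeGroup X} {x : X} (hb : w b ≠ 0) (hr : weight w r = 1)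
    {s : FreeGroup (X × ℤ)} (hs : IsConj (rewriting b w r).left s)
    (hfree : ∀ p ∈ letters s, Freiheit s p) {S : Set (X × ℤ)} {k : Multiplicative ℤ}
    (hS : ∀ u ∈ letterSubgroup {x}ᶜ, shift k (rewriting b w u).left ∈ letterSubgroup S)
    {d : X} {i : ℤ} (hdi : (d, i) ∈ letters s) (hdS : ∀ j, (d, j) ∈ S → j = i)
    {e : X × ℤ} (he : e ∈ letters s) (heS : e ∉ S) : Freiheit r x := by
  refine Subgroup.disjoint_def.2 fun {u} hux hur => ?_
  have hu : weight w u = 1 := weight_eq_one_of_mem_normalClosure hr hur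
  obtain ⟨m, M, hi, hm, hM, hsW⟩ := exists_window hdi
  have hSW : S ⊆ window d m M := by
    rintro ⟨_, j⟩ hj rfl
    rwa [hdS j hj]
  have hSe : S ⊆ {e}ᶜ := Set.subset_compl_singleton_iff.2 heS
  have hvS := hS u hux
  have hvs := mem_normalClosure_of_inl_mem hsW (hfree _ hm) (hfree _ hM)
    (letterSubgroup_mono hSW hvS) (inl_shift_rewriting_left_mem hr hs hur k)
  have hv : shift k (rewriting b w u).left = 1 :=
    Subgroup.disjoint_def.1 (hfree e he) (letterSubgroup_mono hSe hvS) hvs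
  rw [← unrewriting_rewriting_left hb hu, (map_eq_one_iff _ (shift k).injective).1 hv,
    _root_.map_one]

end Rewriting

section ZeroExponentSum

variable [DecidableEq X] {r : FreeGroup X} {x : X}

lemma rewriting_left_mem_level_zero {u : FreeGroup X} (hu : u ∈ letterSubgroup {x}ᶜ) :
    (rewriting x (Pi.single x 1) u).left ∈ letterSubgroup {p : X × ℤ | p.2 = 0} := by
  have hmap : rewriting x (Pi.single x 1) u ∈
      (letterSubgroup {p : X × ℤ | p.2 = 0}).map inl := by
    refine map_mem_of_mem_letterSubgroup _ (fun y (hy : y ≠ x) => ?_) hu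
    refine ⟨FreeGroup.of (y, 0), of_mem_letterSubgroup rfl, ?_⟩
    ext <;> simp [rewriting_of, hy]
  obtain ⟨v, hv, hvu⟩ := hmap
  rwa [← hvu, left_inl]

lemma conj_unrewriting_mem_of_level {s : FreeGroup (X × ℤ)} {i : ℤ}
    (hs : s ∈ letterSubgroup {p : X × ℤ | p.2 = i}) :
    MulAut.conj (FreeGroup.of x ^ (-i)) (unrewriting x (Pi.single x 1) s) ∈
      letterSubgroup {x}ᶜ := by
  refine map_mem_of_mem_letterSubgroup
    ((MulAut.conj (FreeGroup.of x ^ (-i))).toMonoidHom.comp (unrewriting x (Pi.single x 1))) ?_ hs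
  rintro ⟨c, i⟩ rfl
  change FreeGroup.of x ^ (-i) * _ * (FreeGroup.of x ^ (-i))⁻¹ ∈ _
  by_cases hc : c = x
  · simp [unrewriting_of, hc, zpow_add]
  · simpa [unrewriting_of, hc, mul_assoc] using of_mem_letterSubgroup (S := {x}ᶜ) hc

lemma EssentiallyInvolves.not_mem_level (hx : EssentiallyInvolves r x)
    (hr : weight (Pi.single x 1) r = 1) {s : FreeGroup (X × ℤ)}
    (hs : IsConj (rewriting x (Pi.single x 1) r).left s) (i : ℤ) :
    s ∉ letterSubgroup {p : X × ℤ | p.2 = i} := fun hi =>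
  hx _ ((isConj_unrewriting (by simp) hr hs).trans (isConj_iff.2 ⟨_, rfl⟩))
    (conj_unrewriting_mem_of_level hi)

lemma freiheit_of_weight_single_eq_one (hx : EssentiallyInvolves r x)
    (hr : weight (Pi.single x 1) r = 1) {s : FreeGroup (X × ℤ)}
    (hs : IsConj (rewriting x (Pi.single x 1) r).left s)
    (hfree : ∀ p ∈ letters s, Freiheit s p) : Freiheit r x := by
  have exists_index_ne (i : ℤ) : ∃ p ∈ letters s, p.2 ≠ i := by
    simpa [mem_letterSubgroup_iff] using hx.not_mem_level hr hs i
  obtain ⟨⟨d, i⟩, hdi, -⟩ := exists_index_ne 0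
  obtain ⟨e, he, hei⟩ := exists_index_ne i
  refine freiheit_of_rewriting (S := {p | p.2 = i}) (k := Multiplicative.ofAdd i) (by simp) hr hs
    hfree (fun u hu => ?_) hdi (fun _ => id) he hei
  exact shift_mem_letterSubgroup (by simp) (rewriting_left_mem_level_zero hu)

end ZeroExponentSum

section NonzeroExponentSum

variable [DecidableEq X] {r : FreeGroup X} {x b : X} {w : X → ℤ}

lemma rewriting_left_mem_letterSubgroup_fst_ne {u : FreeGroup X}
    (hu : u ∈ letterSubgroup {x}ᶜ) :
    (rewriting b w u).left ∈ letterSubgroup {p : X × ℤ | p.1 ≠ x} := by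
  have shift_mem (k : Multiplicative ℤ) {v : FreeGroup (X × ℤ)}
      (hv : v ∈ letterSubgroup {p : X × ℤ | p.1 ≠ x}) :
      shift k v ∈ letterSubgroup {p : X × ℤ | p.1 ≠ x} :=
    shift_mem_letterSubgroup (fun _ => id) hv
  let K : Subgroup (FreeGroup (X × ℤ) ⋊[shift] Multiplicative ℤ) :=
    { carrier := {v | v.left ∈ letterSubgroup {p : X × ℤ | p.1 ≠ x}}
      one_mem' := (letterSubgroup {p : X × ℤ | p.1 ≠ x}).one_mem
      mul_mem' := fun hv hv' => mul_mem hv (shift_mem _ hv')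
      inv_mem' := fun hv => shift_mem _ (inv_mem hv) }
  refine map_mem_of_mem_letterSubgroup (K := K) _ (fun y hy => ?_) hu
  change (rewriting b w (FreeGroup.of y)).left ∈ letterSubgroup {p : X × ℤ | p.1 ≠ x}
  rw [rewriting_of]
  dsimp only
  split_ifs
  exacts [one_mem _, of_mem_letterSubgroup hy]

lemma freiheit_of_weight_eq_one (hx : EssentiallyInvolves r x) (hbx : b ≠ x) (hb : w b ≠ 0)
    (hr : weight w r = 1) {s : FreeGroup (X × ℤ)} (hs : IsConj (rewriting b w r).left s)
    (hfree : ∀ p ∈ letters s, Freiheit s p) : Freiheit r x := by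
  have hsx : s ∉ letterSubgroup {p : X × ℤ | p.1 ≠ x} := fun h =>
    hx _ (isConj_unrewriting hb hr hs) (unrewriting_mem_of_fst_ne hbx h)
  obtain ⟨i, hi⟩ : ∃ i, (x, i) ∈ letters s := by
    by_contra! h
    exact hsx (mem_letterSubgroup_iff.2 fun p hp hpx => h p.2 (hpx ▸ hp))
  refine freiheit_of_rewriting (S := {p | p.1 ≠ x}) (k := 1) hb hr hs hfree (fun u hu => ?_) hi
    (fun _ h => absurd rfl h) hi (fun h => h rfl)
  simpa using rewriting_left_mem_letterSubgroup_fst_ne hu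

lemma exists_weight_eq_one (hbx : b ≠ x) (hr : weight (Pi.single x 1) r ≠ 1) :
    ∃ w : X → ℤ, w b ≠ 0 ∧ weight w r = 1 := by
  set α := (weight (Pi.single x 1) r).toAdd with hα
  set β := (weight (Pi.single b 1) r).toAdd with hβ
  refine ⟨α • Pi.single b 1 + (-β) • Pi.single x 1, by simpa [hα, hbx] using hr, ?_⟩
  rw [← toAdd_eq_zero, weight_smul_add_smul, MonoidHom.mul_apply, toAdd_mul]
  simp [← hα, ← hβ, mul_comm]

end NonzeroExponentSum

theorem EssentiallyInvolves.freiheit {X : Type u} {r : FreeGroup X} {x : X}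
    (hx : EssentiallyInvolves r x) : Freiheit r x := by
  have hX : DecidableEq X := Classical.decEq X
  induction hn : r.norm using Nat.strong_induction_on generalizing X with
  | _ n ih =>
  subst hn
  have exists_rewritten {b : X} (w : X → ℤ) (hb : b ∈ letters r) :
      ∃ s, IsConj (rewriting b w r).left s ∧ ∀ p ∈ letters s, Freiheit s p := by
    obtain ⟨s, hs, hnorm, hess⟩ := exists_isConj_forall_essentiallyInvolves (rewriting b w r).left
    exact ⟨s, hs, fun p hp =>
      ih _ (hnorm.trans_lt (norm_rewriting_left_lt hb)) (hess p hp) inferInstance rfl⟩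
  by_cases hsum : weight (Pi.single x 1) r = 1
  · obtain ⟨s, hs, hfree⟩ := exists_rewritten (Pi.single x 1) hx.mem_letters
    exact freiheit_of_weight_single_eq_one hx hsum hs hfree
  by_cases hother : ∃ b ∈ letters r, b ≠ x
  · obtain ⟨b, hb, hbx⟩ := hother
    obtain ⟨w, hwb, hr⟩ := exists_weight_eq_one hbx hsum
    obtain ⟨s, hs, hfree⟩ := exists_rewritten w hb
    exact freiheit_of_weight_eq_one hx hbx hwb hr hs hfree
  · push Not at hother
    have hrx : r ∈ letterSubgroup {x} := mem_letterSubgroup_iff.2 hother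
    exact freiheit_of_kill_eq_one
      (eq_of_mem_letterSubgroup (g := 1) (fun y hy => by simp_all [kill]) hrx)

end Magnus

lemma CyclicallyReduced.isCyclicallyReduced_toWord {X : Type} [DecidableEq X] {r : FreeGroup X}
    (hr : CyclicallyReduced r) : FreeGroup.IsCyclicallyReduced r.toWord := by
  refine ⟨FreeGroup.isReduced_toWord, ?_⟩
  rintro ⟨y, c⟩ hlast ⟨_, c'⟩ hhead rfl
  by_contra hne
  have hc : c = !c' := Bool.eq_not_of_ne hne
  exact hr y c' hhead (hc ▸ hlast)

theorem freiheitssatz_general {X : Type*} (r : FreeGroup X) (x : X)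
    (hx : Magnus.EssentiallyInvolves r x) :
    Function.Injective
      ((QuotientGroup.mk' (Subgroup.normalClosure {r})).comp
        (FreeGroup.lift (fun y : {y : X // y ≠ x} => FreeGroup.of y.1))) := by
  simpa only [FreeGroup.map_eq_lift, Function.comp_def] using
    hx.freiheit.injective_mk_comp_map Subtype.val_injective Subtype.prop

/-- **Magnus' Freiheitssatz.** If `r` is cyclically reduced and contains the basis element `x`,
then the free group on `X \ {x}` embeds canonically into `F/⟨⟨r⟩⟩`. -/
theorem freiheitssatz {X : Type} [DecidableEq X] (r : FreeGroup X) (x : X)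
    (hcr : CyclicallyReduced r) (hx : ∃ b : Bool, (x, b) ∈ r.toWord) :
    Function.Injective
      ((QuotientGroup.mk' (Subgroup.normalClosure {r})).comp
        (FreeGroup.lift (fun y : {y : X // y ≠ x} => FreeGroup.of y.1))) :=
  freiheitssatz_general r x <| Magnus.essentiallyInvolves_of_isCyclicallyReduced
    hcr.isCyclicallyReduced_toWord (Magnus.mem_letters.2 hx)
end

section
/- Let G = ⟨a,b,c,d,z | [a,b][c,d] = z⁴⟩. Then for every homomorphism φ from G to a free group F, φ(z) = 1. Consequently G is not residually free and hence not a limit group. -/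
/-!
If `z ≠ 1`, conjugate it to a cyclically reduced word `L` of length `p`, and suppose that `L ^ n` is
a product of `g` commutators. Then `L ^ n` is read along the boundary of a surface with `g` handles:
it is the image of a word `W` in which every edge occurs exactly once in each direction. Gluing the
sides of a disc with boundary `W` gives a closed surface with `n * p / 2` edges, and homology shows
that it has more than `n * p / 2 - 2 * g` vertices.

Free groups are bi-orderable, so the rotations of `L` serve as heights of the corners of the disc,
and each edge has a well-defined low side (`L` being cyclically reduced, the two heights differ). At
a corner where the height is minimal among the corners of its vertex, both adjacent sides are low.
On the other hand, each of the `n` turns around `L` passes from low to high at least once. Since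
half of the `n * p` sides are low, there are at most `n * p / 2 - n` vertices, so that `n < 2 * g`.
-/

/-- The single relator `[a,b][c,d]z⁻⁴` in the free group on five generators
`a,b,c,d,z` (indexed `0,1,2,3,4`). -/
def surfaceLikeRel : Set (FreeGroup (Fin 5)) :=
  { (FreeGroup.of 0)⁻¹ * (FreeGroup.of 1)⁻¹ * FreeGroup.of 0 * FreeGroup.of 1 *
    ((FreeGroup.of 2)⁻¹ * (FreeGroup.of 3)⁻¹ * FreeGroup.of 2 * FreeGroup.of 3) *
    ((FreeGroup.of 4) ^ 4)⁻¹ }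

section Biorder

open Polynomial
open scoped Pointwise

theorem freeGroup_lift_injective_of_zpow_ping_pong {ι G α : Type*} [Nontrivial ι] [Group G]
    [MulAction G α] (a : ι → G) (X : ι → Set α) (hne : ∀ i, (X i).Nonempty)
    (hdisj : Pairwise (Function.onFun Disjoint X))
    (hmaps : Pairwise fun i j => ∀ n : ℤ, n ≠ 0 → a i ^ n • X j ⊆ X i) :
    Function.Injective (FreeGroup.lift a) := by
  have hlift : FreeGroup.lift a =
      (Monoid.CoprodI.lift fun i => FreeGroup.lift fun _ => a i).comp
        (freeGroupEquivCoprodI (ι := ι)).toMonoidHom := by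
    ext i
    simp
  rw [hlift, MonoidHom.coe_comp]
  refine .comp ?_ freeGroupEquivCoprodI.injective
  refine Monoid.CoprodI.lift_injective_of_ping_pong (fun i => FreeGroup.lift fun _ => a i)
    (Or.inr ⟨Classical.arbitrary ι, ?_⟩) X hne hdisj fun i j hij h hh => ?_
  · rw [FreeGroup.freeGroupUnitEquivInt.cardinal_eq, Cardinal.mk_denumerable]
    exact Cardinal.natCast_le_aleph0
  · obtain ⟨n, rfl⟩ := FreeGroup.freeGroupUnitEquivInt.symm.surjective h
    have hn : n ≠ 0 := by
      rintro rfl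
      exact hh (zpow_zero _)
    have hpow : FreeGroup.lift (fun _ => a i) (FreeGroup.freeGroupUnitEquivInt.symm n) = a i ^ n :=
      (map_zpow _ _ _).trans (by rw [FreeGroup.lift_apply_of])
    simpa only [hpow] using hmaps hij n hn

variable {R : Type*} [Ring R]

/-- The unipotent unit `1 + N` attached to an element `N` of square zero. -/
def oneAddUnit (N : R) (hN : N * N = 0) : Rˣ where
  val := 1 + N
  inv := 1 - N
  val_inv := by simp [add_mul, mul_sub, hN]
  inv_val := by simp [sub_mul, mul_add, hN]

theorem val_oneAddUnit_zpow (N : R) (hN : N * N = 0) (n : ℤ) :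
    ((oneAddUnit N hN ^ n : Rˣ) : R) = 1 + n • N := by
  induction n using Int.induction_on with
  | zero => simp
  | succ n ih =>
    rw [zpow_add_one, Units.val_mul, ih, add_smul, one_smul]
    change (1 + (n : ℤ) • N) * (1 + N) = _
    rw [mul_add, mul_one, add_mul, one_mul, smul_mul_assoc, hN, smul_zero, add_zero, add_assoc]
  | pred n ih =>
    rw [zpow_sub_one, Units.val_mul, ih, sub_smul, one_smul]
    change (1 + (-n : ℤ) • N) * (1 - N) = _
    rw [mul_sub, mul_one, add_mul, one_mul, smul_mul_assoc, hN, smul_zero, add_zero, add_sub_assoc]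

/-- The operator on integer-valued functions on words which transports the value at `w` to the
word `x :: w`. Words starting with `x` contribute nothing, so that the square of the operator
vanishes. -/
noncomputable def prependOp {β : Type*} (x : β) : Module.End ℤ (List β → ℤ) where
  toFun f w := by
    classical exact if w.head? = some x ∧ w.tail.head? ≠ some x then f w.tail else 0
  map_add' f g := by ext w; simp only [Pi.add_apply]; split_ifs <;> simp
  map_smul' c f := by ext w; simp

theorem prependOp_cons {β : Type*} {x : β} {w : List β} (hw : w.head? ≠ some x) (f : List β → ℤ) :
    prependOp x f (x :: w) = f w := by
  simp [prependOp, hw]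

theorem exists_eq_cons_of_prependOp_ne_zero {β : Type*} {x : β} {f : List β → ℤ} {w : List β}
    (h : prependOp x f w ≠ 0) : ∃ w', w = x :: w' ∧ w'.head? ≠ some x ∧ f w' ≠ 0 := by
  simp only [prependOp, LinearMap.coe_mk, AddHom.coe_mk, ne_eq, ite_eq_right_iff,
    Classical.not_imp] at h
  obtain ⟨⟨hhead, htail⟩, hf⟩ := h
  exact ⟨w.tail, (List.cons_head?_tail hhead).symm, htail, hf⟩

theorem prependOp_mul_self {β : Type*} (x : β) : prependOp x * prependOp x = 0 := by
  ext f w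
  by_contra h
  obtain ⟨w', -, hw', h'⟩ := exists_eq_cons_of_prependOp_ne_zero h
  obtain ⟨w'', rfl, -, -⟩ := exists_eq_cons_of_prependOp_ne_zero h'
  exact hw' rfl

/-- Ping-pong sets for the operators `1 + k • prependOp x`: the functions whose support has longest
words, all of which start with `x`. -/
def pingPongSet {β : Type*} (x : β) : Set (List β → ℤ) :=
  {f | ∃ n, (∃ w, w.length = n ∧ f w ≠ 0) ∧
    ∀ w, n ≤ w.length → f w ≠ 0 → w.length = n ∧ w.head? = some x}

theorem pingPongSet_nonempty {β : Type*} (x : β) : (pingPongSet x).Nonempty := by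
  classical
  refine ⟨Pi.single [x] 1, 1, ⟨[x], rfl, by simp⟩, fun w _ hw => ?_⟩
  obtain rfl : w = [x] := by
    by_contra h
    exact hw (Pi.single_eq_of_ne h 1)
  exact ⟨rfl, rfl⟩

theorem disjoint_pingPongSet {β : Type*} {x y : β} (hxy : x ≠ y) :
    Disjoint (pingPongSet x) (pingPongSet y) := by
  refine Set.disjoint_left.2 ?_
  rintro f ⟨n, ⟨w, hwn, hw⟩, hn⟩ ⟨m, ⟨w', hwm, hw'⟩, hm⟩
  obtain rfl : n = m := by
    rcases le_total n m with h | h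
    · rw [← hwm, (hn w' (hwm ▸ h) hw').1]
    · rw [← hwn, (hm w (hwn ▸ h) hw).1]
  exact hxy (Option.some.inj ((hn w hwn.ge hw).2.symm.trans (hm w hwn.ge hw).2))

theorem add_smul_prependOp_mem_pingPongSet {β : Type*} {x y : β} (hyx : y ≠ x) {k : ℤ}
    (hk : k ≠ 0) {f : List β → ℤ} (hf : f ∈ pingPongSet x) :
    f + k • prependOp y f ∈ pingPongSet y := by
  obtain ⟨n, ⟨w, hwn, hw⟩, hn⟩ := hf
  have hvanish : ∀ w, n + 1 ≤ w.length → f w = 0 := fun w hlen => by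
    by_contra h
    have := (hn w (by lia) h).1
    lia
  refine ⟨n + 1, ⟨y :: w, by simp [hwn], ?_⟩, fun v hlen hv => ?_⟩
  · have hhead : w.head? ≠ some y := by
      rw [(hn w hwn.ge hw).2]
      exact fun h => hyx (Option.some.inj h).symm
    simp [hvanish (y :: w) (by simp [hwn]), prependOp_cons hhead, hk, hw]
  · obtain ⟨w', rfl, -, hw'⟩ := exists_eq_cons_of_prependOp_ne_zero (x := y) (f := f) (w := v)
      fun h => hv (by simp [hvanish v hlen, h])
    exact ⟨congrArg (· + 1) (hn w' (by simpa using hlen) hw').1, rfl⟩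

theorem C_prependOp_mul_X_mul_self {β : Type*} (x : β) :
    C (prependOp x) * X * (C (prependOp x) * X) = 0 := by
  rw [mul_assoc, ← mul_assoc X, X_mul_C, mul_assoc, ← mul_assoc, ← C_mul, prependOp_mul_self,
    C_0, zero_mul]

/-- The Magnus homomorphism, sending a generator `x` to `1 + D X` where `D = prependOp x`. -/
noncomputable def magnusHom (β : Type*) : FreeGroup β →* (Module.End ℤ (List β → ℤ))[X]ˣ :=
  FreeGroup.lift fun x => oneAddUnit (C (prependOp x) * X) (C_prependOp_mul_X_mul_self x)

theorem coeff_zero_magnusHom {β : Type*} (g : FreeGroup β) :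
    (magnusHom β g : (Module.End ℤ (List β → ℤ))[X]).coeff 0 = 1 := by
  have htriv : (Units.map (constantCoeff : (Module.End ℤ (List β → ℤ))[X] →+* _).toMonoidHom).comp
      (magnusHom β) = 1 := by
    ext x : 2
    simp [magnusHom, oneAddUnit]
  exact congrArg Units.val (DFunLike.congr_fun htriv g)

theorem magnusHom_injective (β : Type*) [Nontrivial β] : Function.Injective (magnusHom β) := by
  let evalOne : (Module.End ℤ (List β → ℤ))[X] →+* Module.End ℤ (List β → ℤ) :=
    eval₂RingHom' (RingHom.id _) 1 fun a => Commute.one_right a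
  have hcomp : (Units.map evalOne.toMonoidHom).comp (magnusHom β) =
      FreeGroup.lift fun x => oneAddUnit (prependOp x) (prependOp_mul_self x) := by
    ext x : 2
    simp [magnusHom, oneAddUnit, evalOne]
  refine Function.Injective.of_comp (f := Units.map evalOne.toMonoidHom) ?_
  rw [← MonoidHom.coe_comp, hcomp]
  refine freeGroup_lift_injective_of_zpow_ping_pong _ pingPongSet pingPongSet_nonempty
    (fun x y hxy => disjoint_pingPongSet hxy) fun y x hyx k hk => ?_
  rintro _ ⟨f, hf, rfl⟩
  change ((oneAddUnit _ _ ^ k : (Module.End ℤ (List β → ℤ))ˣ) : Module.End ℤ (List β → ℤ)) f ∈ _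
  rw [val_oneAddUnit_zpow]
  exact add_smul_prependOp_mem_pingPongSet hyx hk hf

theorem exists_linearOrder_isOrderedAddMonoid_of_injective {A I : Type*} [AddCommGroup A]
    (f : A →+ I → ℤ) (hf : Function.Injective f) :
    ∃ _ : LinearOrder A, IsOrderedAddMonoid A := by
  obtain ⟨_, _⟩ := exists_wellFoundedLT I
  let F : A → Lex (I → ℤ) := fun a => toLex (f a)
  let _ : LinearOrder A := LinearOrder.lift' F (toLex.injective.comp hf)
  exact ⟨inferInstance, Function.Injective.isOrderedAddMonoid F
    (fun a b => congrArg toLex (map_add f a b)) Iff.rfl⟩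

/-- Two elements are compared at the lowest coefficient where they differ; the difference of these
coefficients is unchanged by multiplication with polynomials of constant coefficient `1`. -/
theorem exists_biorder_of_injective_unitsPolynomial {G : Type*} [Group G] [LinearOrder R]
    [IsOrderedAddMonoid R] (Φ : G →* R[X]ˣ) (hΦ : Function.Injective Φ)
    (hone : ∀ g, (Φ g : R[X]).coeff 0 = 1) :
    ∃ _ : LinearOrder G, MulLeftStrictMono G ∧ MulRightStrictMono G := by
  let P : G → R[X] := fun g => Φ g
  have hmul : ∀ g h, P (g * h) = P g * P h := fun g h => by simp [P]
  let F : G → Lex (ℕ → R) := fun g => toLex fun n => (P g).coeff n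
  have hF : Function.Injective F := fun g h hgh =>
    hΦ (Units.ext (Polynomial.ext fun n => congrFun (toLex.injective hgh) n))
  let _ : LinearOrder G := LinearOrder.lift' F hF
  have hmono : ∀ g h x y : G, x < y → g * x * h < g * y * h := by
    rintro g h x y ⟨n, hlow, hn⟩
    obtain ⟨q, hq⟩ : X ^ n ∣ P y - P x :=
      X_pow_dvd_iff.2 fun m hm => by rw [coeff_sub, sub_eq_zero]; exact (hlow m hm).symm
    have hdiff : P (g * y * h) - P (g * x * h) = X ^ n * (P g * q * P h) := by
      rw [hmul, hmul, hmul, hmul, ← sub_mul, ← mul_sub, hq, ← mul_assoc (P g), ← X_pow_mul,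
        mul_assoc, mul_assoc, mul_assoc]
    have hcoeff : (P (g * y * h) - P (g * x * h)).coeff n = (P y - P x).coeff n := by
      rw [hdiff, hq, coeff_X_pow_mul', coeff_X_pow_mul']
      simp [P, hone]
    refine ⟨n, fun m hm => ?_, ?_⟩
    · have hzero := congrArg (coeff · m) hdiff
      simp only [coeff_sub, coeff_X_pow_mul', if_neg hm.not_ge] at hzero
      exact (sub_eq_zero.1 hzero).symm
    · rw [coeff_sub, coeff_sub] at hcoeff
      exact sub_pos.1 (hcoeff ▸ sub_pos.2 hn)
  exact ⟨inferInstance, ⟨fun g x y hxy => by simpa using hmono g 1 x y hxy⟩,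
    ⟨fun g x y hxy => by simpa using hmono 1 g x y hxy⟩⟩

theorem exists_biorder_of_injective {G H : Type*} [Group G] [Group H] [LinearOrder H]
    [MulLeftStrictMono H] [MulRightStrictMono H] (f : G →* H) (hf : Function.Injective f) :
    ∃ _ : LinearOrder G, MulLeftStrictMono G ∧ MulRightStrictMono G := by
  let _ : LinearOrder G := LinearOrder.lift' f hf
  have hlt : ∀ x y : G, x < y ↔ f x < f y := fun x y => Iff.rfl
  exact ⟨inferInstance, ⟨fun g x y hxy => by simpa [hlt] using hxy⟩,
    ⟨fun g x y hxy => by simpa [hlt] using hxy⟩⟩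

theorem freeGroup_exists_biorder (β : Type*) :
    ∃ _ : LinearOrder (FreeGroup β),
      MulLeftStrictMono (FreeGroup β) ∧ MulRightStrictMono (FreeGroup β) := by
  let matrixCoeff : Module.End ℤ (List (β ⊕ Bool) → ℤ) →+
      (List (β ⊕ Bool) → ℤ) × List (β ⊕ Bool) → ℤ :=
    { toFun T p := T p.1 p.2
      map_zero' := rfl
      map_add' _ _ := rfl }
  obtain ⟨_, _⟩ := exists_linearOrder_isOrderedAddMonoid_of_injective matrixCoeff
    fun S T h => LinearMap.ext fun f => funext fun w => congrFun h (f, w)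
  have : Nontrivial (β ⊕ Bool) := Sum.inr_injective.nontrivial
  obtain ⟨_, _, _⟩ := exists_biorder_of_injective_unitsPolynomial (magnusHom (β ⊕ Bool))
    (magnusHom_injective _) coeff_zero_magnusHom
  exact exists_biorder_of_injective (FreeGroup.map (Sum.inl : β → β ⊕ Bool))
    (FreeGroup.map_injective Sum.inl_injective)

end Biorder

section CommutatorProducts

open scoped Pointwise

variable {G H : Type*} [Group G] [Group H]

theorem map_mem_commutatorSet_pow (f : G →* H) {g : ℕ} {x : G} (hx : x ∈ commutatorSet G ^ g) :
    f x ∈ commutatorSet H ^ g := by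
  have himage : f '' commutatorSet G ⊆ commutatorSet H := by
    rintro _ ⟨_, ⟨a, b, rfl⟩, rfl⟩
    exact ⟨f a, f b, (map_commutatorElement f a b).symm⟩
  exact Set.pow_subset_pow_left himage (Set.image_pow f _ g ▸ Set.mem_image_of_mem f hx)

theorem exists_finset_mem_commutator_of_mem_commutatorSet_pow {g : ℕ} {x : G}
    (hx : x ∈ commutatorSet G ^ g) :
    ∃ B : Finset G, B.card ≤ 2 * g ∧ ∀ K : Subgroup G, (B : Set G) ⊆ K → x ∈ ⁅K, K⁆ := by
  classical
  induction g generalizing x with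
  | zero =>
    obtain rfl : x = 1 := by simpa using hx
    exact ⟨∅, by simp, fun K _ => one_mem _⟩
  | succ g ih =>
    rw [pow_succ] at hx
    obtain ⟨y, hy, _, ⟨a, b, rfl⟩, rfl⟩ := hx
    obtain ⟨B, hcard, hB⟩ := ih hy
    refine ⟨insert a (insert b B), ?_, fun K hK => ?_⟩
    · have h₁ := B.card_insert_le b
      have h₂ := (insert b B).card_insert_le a
      lia
    · simp only [Finset.coe_insert, Set.insert_subset_iff] at hK
      exact mul_mem (hB K hK.2.2) (Subgroup.commutator_mem_commutator hK.1 hK.2.1)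

end CommutatorProducts

section QuadraticLift

open FreeGroup
open scoped Pointwise

variable {E β : Type*}

theorem mem_invRev {A : List (E × Bool)} {l : E × Bool} :
    l ∈ invRev A ↔ (l.1, !l.2) ∈ A := by
  simp [invRev, Prod.ext_iff]

theorem nodup_append_invRev {A : List (E × Bool)} (h : (A.map Prod.fst).Nodup) :
    (A ++ invRev A).Nodup := by
  have hflip : Function.Injective fun l : E × Bool => (l.1, !l.2) := fun x y hxy => by
    simpa [Prod.ext_iff] using hxy
  refine List.nodup_append'.2 ⟨h.of_map _, List.nodup_reverse.2 ((h.of_map _).map hflip), ?_⟩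
  intro l hl hl'
  have := List.inj_on_of_nodup_map h hl (mem_invRev.1 hl') rfl
  simpa using congrArg Prod.snd this

theorem map_invRev (f : E → β) (A : List (E × Bool)) :
    (invRev A).map (Prod.map f id) = invRev (A.map (Prod.map f id)) := by
  simp [invRev, Function.comp_def]

/-- `HasQuadraticLift g w`: the word `w` is obtained by relabelling a quadratic word in some
alphabet `E` which represents a product of `g` commutators. Quadratic means that every letter of
`E` occurs at most once with each sign; for a product of commutators the two signs then occur
equally often. Geometrically, `w` is the boundary label of a surface of genus `g` with one boundary
component mapping to a rose. -/
def HasQuadraticLift (g : ℕ) (w : List (β × Bool)) : Prop :=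
  ∃ (E : Type) (f : E → β) (W : List (E × Bool)),
    W.map (Prod.map f id) = w ∧ W.Nodup ∧ mk W ∈ commutatorSet (FreeGroup E) ^ g

theorem hasQuadraticLift_nil : HasQuadraticLift 0 ([] : List (β × Bool)) :=
  ⟨Empty, Empty.elim, [], rfl, List.nodup_nil, by simp [← one_eq_mk]⟩

theorem hasQuadraticLift_commutator (a b : List (β × Bool)) :
    HasQuadraticLift 1 (a ++ b ++ invRev a ++ invRev b) := by
  let f : Fin (a ++ b).length → β := fun i => (a ++ b)[i].1
  let C : List (Fin (a ++ b).length × Bool) := List.ofFn fun i => (i, (a ++ b)[i].2)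
  have hC : C.map (Prod.map f id) = a ++ b := by
    simp only [C, List.map_ofFn]
    exact List.ofFn_getElem
  have hCnodup : (C.map Prod.fst).Nodup := by
    simp only [C, List.map_ofFn]
    exact List.nodup_ofFn_ofInjective Function.injective_id
  obtain ⟨A, B, hAB, hA, hB⟩ := List.map_eq_append_iff.1 hC
  refine ⟨_, f, A ++ B ++ invRev A ++ invRev B, ?_, ?_, ?_⟩
  · simp only [List.map_append, map_invRev, hA, hB]
  · have hperm : (A ++ B ++ (invRev A ++ invRev B)).Perm (C ++ invRev C) := by
      rw [hAB, invRev_append]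
      exact List.perm_append_comm.append_left _
    rw [List.append_assoc]
    exact hperm.nodup_iff.2 (nodup_append_invRev hCnodup)
  · rw [pow_one]
    exact ⟨mk A, mk B, by simp [commutatorElement_def]⟩

theorem HasQuadraticLift.append {g h : ℕ} {v w : List (β × Bool)} (hv : HasQuadraticLift g v)
    (hw : HasQuadraticLift h w) : HasQuadraticLift (g + h) (v ++ w) := by
  obtain ⟨E, e, V, rfl, hV, hVg⟩ := hv
  obtain ⟨F, f, W, rfl, hW, hWh⟩ := hw
  refine ⟨E ⊕ F, Sum.elim e f, V.map (Prod.map Sum.inl id) ++ W.map (Prod.map Sum.inr id), ?_, ?_,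
    ?_⟩
  · simp only [List.map_append, List.map_map, Prod.map_comp_map, Sum.elim_comp_inl,
      Sum.elim_comp_inr, Function.comp_id]
  · refine List.nodup_append'.2 ⟨hV.map (Sum.inl_injective.prodMap Function.injective_id),
      hW.map (Sum.inr_injective.prodMap Function.injective_id), ?_⟩
    simp [List.Disjoint]
  · rw [← mul_mk, pow_add]
    exact Set.mul_mem_mul (map_mem_commutatorSet_pow (FreeGroup.map Sum.inl) hVg)
      (map_mem_commutatorSet_pow (FreeGroup.map Sum.inr) hWh)

theorem exists_hasQuadraticLift_of_mem_commutatorSet_pow {g : ℕ} {x : FreeGroup β}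
    (hx : x ∈ commutatorSet (FreeGroup β) ^ g) : ∃ w, mk w = x ∧ HasQuadraticLift g w := by
  induction g generalizing x with
  | zero => exact ⟨[], by simpa [eq_comm, ← one_eq_mk] using hx, hasQuadraticLift_nil⟩
  | succ g ih =>
    rw [pow_succ] at hx
    obtain ⟨y, hy, _, ⟨⟨a⟩, ⟨b⟩, rfl⟩, rfl⟩ := hx
    obtain ⟨w, rfl, hw⟩ := ih hy
    exact ⟨_, by simp only [← mul_mk, ← inv_mk]; rfl,
      hw.append (hasQuadraticLift_commutator a b)⟩

theorem injOn_prodMap_update [DecidableEq E] {S : Set (E × Bool)} {i j : E} {t : Bool}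
    (hi : (i, t) ∉ S) (hj : (j, !t) ∉ S) :
    Set.InjOn (Prod.map (Function.update id j i) (id : Bool → Bool)) S := by
  rintro ⟨e, b⟩ he ⟨e', b'⟩ he' h
  obtain rfl : b = b' := congrArg Prod.snd h
  have hfst : Function.update id j i e = Function.update id j i e' := congrArg Prod.fst h
  simp only [Function.update_apply, id] at hfst
  clear h
  rcases Bool.eq_or_eq_not b t with rfl | rfl <;> grind

/-- Cancelling adjacent letters of `w` is realised on the quadratic lift by gluing the two edges
`i` and `j` that carry them. -/
theorem HasQuadraticLift.step {g : ℕ} {w w' : List (β × Bool)} (hw : HasQuadraticLift g w)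
    (hstep : Red.Step w w') : HasQuadraticLift g w' := by
  classical
  obtain ⟨E, f, W, hWw, hnodup, hmem⟩ := hw
  obtain @⟨L₁, L₂, x, t⟩ := hstep
  obtain ⟨P, _, rfl, hP, htail⟩ := List.map_eq_append_iff.1 hWw
  obtain ⟨⟨i, s⟩, _, rfl, hi, htail⟩ := List.map_eq_cons_iff.1 htail
  obtain ⟨⟨j, s'⟩, Q, rfl, hj, hQ⟩ := List.map_eq_cons_iff.1 htail
  obtain ⟨rfl, rfl : s = t⟩ := Prod.mk.inj hi
  obtain ⟨hji, rfl : s' = !s⟩ := Prod.mk.inj hj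
  let glue : E → E := Function.update id j i
  have hglue : ∀ e, f (glue e) = f e := fun e => by
    by_cases he : e = j <;> simp [glue, he, hji]
  have hperm : (P ++ (i, s) :: (j, !s) :: Q).Perm ((i, s) :: (j, !s) :: (P ++ Q)) :=
    List.perm_middle.trans (List.perm_middle.cons _)
  obtain ⟨hi_notMem, hj_nodup⟩ := List.nodup_cons.1 (hperm.nodup_iff.1 hnodup)
  obtain ⟨hj_notMem, hPQ⟩ := List.nodup_cons.1 hj_nodup
  refine ⟨E, f, (P ++ Q).map (Prod.map glue id), ?_, ?_, ?_⟩
  · rw [← hP, ← hQ, ← List.map_append, List.map_map]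
    exact List.map_congr_left fun l _ => Prod.ext (hglue l.1) rfl
  · exact hPQ.map_on fun l hl l' hl' =>
      injOn_prodMap_update (S := {l | l ∈ P ++ Q}) (fun h => hi_notMem (.tail _ h)) hj_notMem hl hl'
  · convert map_mem_commutatorSet_pow (FreeGroup.map glue) hmem using 1
    have hgi : glue i = i := by by_cases hij : i = j <;> simp [glue, hij]
    have hgj : glue j = i := by simp [glue]
    simp only [map.mk, List.map_append, List.map_cons, hgi, hgj]
    exact (Quot.sound Red.Step.not).symm

theorem HasQuadraticLift.red {g : ℕ} {w w' : List (β × Bool)} (hw : HasQuadraticLift g w)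
    (hred : Red w w') : HasQuadraticLift g w' := by
  induction hred with
  | refl => exact hw
  | tail _ hstep ih => exact ih.step hstep

theorem hasQuadraticLift_of_isReduced {g : ℕ} {w : List (β × Bool)} (hw : IsReduced w)
    (hmem : mk w ∈ commutatorSet (FreeGroup β) ^ g) : HasQuadraticLift g w := by
  obtain ⟨v, hvw, hv⟩ := exists_hasQuadraticLift_of_mem_commutatorSet_pow hmem
  obtain ⟨u, hvu, hwu⟩ := Red.exact.1 hvw
  obtain rfl := hw.red_iff_eq.1 hwu
  exact hv.red hvu

end QuadraticLift

section FoxDerivative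

open FreeGroup

variable {E Q : Type*} [Group Q]

open Classical in
/-- The homomorphism to a wreath product whose left component is the Fox derivative with respect to
`e`, pushed forward along `ψ`. In the cover of the rose with deck group `Q`, the value of the left
component at `q` counts how often the lift of a word runs along the `e`-edge starting at `q`, with
sign. -/
noncomputable def foxHom (ψ : FreeGroup E →* Q) (e : E) : FreeGroup E →* Multiplicative ℤ ≀ᵣ Q :=
  FreeGroup.lift fun x =>
    ⟨Pi.mulSingle 1 (Multiplicative.ofAdd (if x = e then 1 else 0)), ψ (of x)⟩

theorem right_foxHom (ψ : FreeGroup E →* Q) (e : E) (g : FreeGroup E) :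
    (foxHom ψ e g).right = ψ g := by
  have hright : RegularWreathProduct.rightHom.comp (foxHom ψ e) = ψ := by
    ext x
    simp [foxHom]
  exact DFunLike.congr_fun hright g

theorem foxHom_eq_one_of_mem_commutator_ker {ψ : FreeGroup E →* Q} {e : E} {g : FreeGroup E}
    (hg : g ∈ ⁅ψ.ker, ψ.ker⁆) : foxHom ψ e g = 1 := by
  suffices ⁅ψ.ker, ψ.ker⁆ ≤ (foxHom ψ e).ker from this hg
  refine Subgroup.commutator_le.2 fun a ha b hb => ?_
  rw [MonoidHom.mem_ker] at ha hb ⊢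
  rw [map_commutatorElement, commutatorElement_eq_one_iff_mul_comm]
  ext q
  · simp [right_foxHom, ha, hb, mul_comm]
  · simp [right_foxHom, ha, hb]

open Classical in
theorem left_foxHom_mk_singleton (ψ : FreeGroup E →* Q) (e : E) (d : E × Bool) (q q' : Q) :
    ((foxHom ψ e (mk [d])).left (q⁻¹ * q')).toAdd =
      (if d = (e, true) ∧ q = q' then 1 else 0) -
        if d = (e, false) ∧ q * ψ (mk [d]) = q' then 1 else 0 := by
  obtain ⟨x, _ | _⟩ := d
  · have hinv : mk [(x, false)] = (of x)⁻¹ := rfl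
    have hend : ψ (of x) * (q⁻¹ * q') = 1 ↔ q * (ψ (of x))⁻¹ = q' := by
      rw [mul_eq_one_iff_inv_eq, eq_inv_mul_iff_mul_eq]
    by_cases hx : x = e
    · subst hx
      simp [hinv, foxHom, Pi.mulSingle_apply, apply_ite Multiplicative.toAdd, hend,
        apply_ite Neg.neg]
    · simp [hinv, foxHom, hx]
  · have hof : mk [(x, true)] = of x := rfl
    by_cases hx : x = e <;>
      simp [hof, foxHom, hx, Pi.mulSingle_apply, apply_ite Multiplicative.toAdd, inv_mul_eq_one]

open Classical in
theorem left_foxHom_mk (ψ : FreeGroup E →* Q) (e : E) (W : List (E × Bool)) (q : Q) :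
    ((foxHom ψ e (mk W)).left q).toAdd =
      ∑ i ∈ Finset.range W.length,
        ((if W[i]? = some (e, true) ∧ ψ (mk (W.take i)) = q then 1 else 0) -
          if W[i]? = some (e, false) ∧ ψ (mk (W.take (i + 1))) = q then 1 else 0) := by
  induction W using List.reverseRecOn with
  | nil => simp [← one_eq_mk]
  | append_singleton W d ih =>
    have hprefix : ∀ i ∈ Finset.range W.length, (W ++ [d])[i]? = W[i]? ∧
        (W ++ [d]).take i = W.take i ∧ (W ++ [d]).take (i + 1) = W.take (i + 1) := fun i hi => by
      have hi := Finset.mem_range.1 hi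
      exact ⟨List.getElem?_append_left hi, List.take_append_of_le_length hi.le,
        List.take_append_of_le_length hi⟩
    rw [← mul_mk, _root_.map_mul, RegularWreathProduct.mul_left, Pi.mul_apply, toAdd_mul,
      right_foxHom, ih, left_foxHom_mk_singleton, List.length_append, List.length_singleton,
      Finset.sum_range_succ]
    congr 1
    · refine Finset.sum_congr rfl fun i hi => ?_
      rw [(hprefix i hi).1, (hprefix i hi).2.1, (hprefix i hi).2.2]
    · have hall : (W ++ [d]).take (W.length + 1) = W ++ [d] := List.take_of_length_le (by simp)
      simp [hall, ← mul_mk]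

theorem exists_forward_crossing_iff_exists_backward_crossing {ψ : FreeGroup E →* Q}
    {W : List (E × Bool)} (hW : mk W ∈ ⁅ψ.ker, ψ.ker⁆) (e : E) (q : Q) :
    (∃ i, W[i]? = some (e, true) ∧ ψ (mk (W.take i)) = q) ↔
      ∃ j, W[j]? = some (e, false) ∧ ψ (mk (W.take (j + 1))) = q := by
  classical
  have hsum := left_foxHom_mk ψ e W q
  rw [foxHom_eq_one_of_mem_commutator_ker hW, RegularWreathProduct.one_left, Pi.one_apply,
    toAdd_one, eq_comm, Finset.sum_sub_distrib, sub_eq_zero, Finset.sum_boole, Finset.sum_boole,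
    Nat.cast_inj] at hsum
  have hrange : ∀ {k d}, W[k]? = some d → k ∈ Finset.range W.length := fun hk =>
    Finset.mem_range.2 (List.getElem?_eq_some_iff.1 hk).1
  constructor
  · rintro ⟨i, hi⟩
    obtain ⟨j, hj⟩ := Finset.card_pos.1
      (hsum ▸ Finset.card_pos.2 ⟨i, Finset.mem_filter.2 ⟨hrange hi.1, hi⟩⟩)
    exact ⟨j, (Finset.mem_filter.1 hj).2⟩
  · rintro ⟨j, hj⟩
    obtain ⟨i, hi⟩ := Finset.card_pos.1
      (hsum.symm ▸ Finset.card_pos.2 ⟨j, Finset.mem_filter.2 ⟨hrange hj.1, hj⟩⟩)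
    exact ⟨i, (Finset.mem_filter.1 hi).2⟩

theorem exists_opposite_crossing {ψ : FreeGroup E →* Q} {W : List (E × Bool)}
    (hW : mk W ∈ ⁅ψ.ker, ψ.ker⁆) {i : ℕ} {e : E} {b : Bool} (hi : W[i]? = some (e, b)) :
    ∃ j, W[j]? = some (e, !b) ∧ ψ (mk (W.take j)) = ψ (mk (W.take (i + 1))) := by
  have htake : ∀ {k d}, W[k]? = some d →
      ψ (mk (W.take (k + 1))) = ψ (mk (W.take k)) * ψ (mk [d]) := fun {k d} hk => by
    rw [List.take_add_one, hk, Option.toList_some, ← mul_mk, _root_.map_mul]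
  have hiff := exists_forward_crossing_iff_exists_backward_crossing hW e
  cases b with
  | true =>
    obtain ⟨j, hj, hji⟩ := (hiff _).1 ⟨i, hi, rfl⟩
    have hinv : mk [(e, false)] = (mk [(e, true)])⁻¹ := rfl
    exact ⟨j, hj, by rw [htake hi, ← hji, htake hj, hinv, _root_.map_inv, inv_mul_cancel_right]⟩
  | false => exact (hiff _).2 ⟨i, hi, rfl⟩

end FoxDerivative

section Homology

open FreeGroup
open scoped Pointwise

variable {β : Type*}

theorem mem_commutatorSet_pow_of_map {E E' : Type*} {f : E' → E} (hf : Function.Injective f)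
    {g : ℕ} {x : FreeGroup E'} (hx : FreeGroup.map f x ∈ commutatorSet (FreeGroup E) ^ g) :
    x ∈ commutatorSet (FreeGroup E') ^ g := by
  let r : FreeGroup E →* FreeGroup E' := FreeGroup.lift (Function.extend f of 1)
  have hr : r.comp (FreeGroup.map f) = MonoidHom.id _ := by
    ext e
    simp [r, hf.extend_apply]
  rw [← MonoidHom.id_apply _ x, ← hr]
  exact map_mem_commutatorSet_pow r hx

theorem opposite_mem_of_mem {E : Type*} {g : ℕ} {W : List (E × Bool)}
    (hmem : mk W ∈ commutatorSet (FreeGroup E) ^ g) {e : E} {b : Bool} (hd : (e, b) ∈ W) :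
    (e, !b) ∈ W := by
  obtain ⟨B, -, hB⟩ := exists_finset_mem_commutator_of_mem_commutatorSet_pow hmem
  obtain ⟨i, hi⟩ := List.mem_iff_getElem?.1 hd
  obtain ⟨j, hj, -⟩ := exists_opposite_crossing (ψ := (1 : FreeGroup E →* Unit)) (hB _ (by simp)) hi
  exact List.mem_of_getElem? hj

theorem HasQuadraticLift.exists_full {g : ℕ} {w : List (β × Bool)} (hw : HasQuadraticLift g w) :
    ∃ (E : Type) (_ : Fintype E) (f : E → β) (W : List (E × Bool)), W.map (Prod.map f id) = w ∧
      W.Nodup ∧ (∀ d, d ∈ W) ∧ mk W ∈ commutatorSet (FreeGroup E) ^ g := by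
  obtain ⟨E, f, W, rfl, hnodup, hmem⟩ := hw
  let U : Set E := Prod.fst '' {d | d ∈ W}
  have : Finite U := (W.finite_toSet.image Prod.fst).to_subtype
  let V : List (U × Bool) :=
      W.attach.map fun d => (⟨d.1.1, Set.mem_image_of_mem Prod.fst d.2⟩, d.1.2)
  have hV : V.map (Prod.map Subtype.val id) = W := by
    simp only [V, List.map_map]
    exact List.attach_map_subtype_val W
  refine ⟨U, Fintype.ofFinite U, f ∘ Subtype.val, V, ?_, ?_, ?_, ?_⟩
  · conv_rhs => rw [← hV]
    simp only [List.map_map, Prod.map_comp_map, Function.comp_id]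
  · exact .of_map (Prod.map Subtype.val id) (hV.symm ▸ hnodup)
  · rintro ⟨⟨_, ⟨e, b⟩, hd, rfl⟩, b'⟩
    have hd' : (e, b') ∈ W := by
      rcases Bool.eq_or_eq_not b' b with rfl | rfl
      exacts [hd, opposite_mem_of_mem hmem hd]
    exact List.mem_map.2 ⟨⟨(e, b'), hd'⟩, List.mem_attach _ _, rfl⟩
  · refine mem_commutatorSet_pow_of_map Subtype.val_injective ?_
    rw [map.mk]
    exact hV.symm ▸ hmem

theorem finrank_lt_card_of_span_eq_top {K V : Type*} [DivisionRing K] [AddCommGroup V]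
    [Module K V] {S : Finset V} (hzero : 0 ∈ S) (hspan : Submodule.span K (S : Set V) = ⊤) :
    Module.finrank K V < S.card := by
  classical
  have herase : Submodule.span K (S.erase 0 : Set V) = ⊤ := by
    rw [Finset.coe_erase, Submodule.span_sdiff_singleton_zero, hspan]
  calc
    Module.finrank K V = Module.finrank K (Submodule.span K (S.erase 0 : Set V)) := by
      rw [herase, finrank_top]
    _ ≤ (S.erase 0).card := finrank_span_finset_le_card _
    _ < S.card := Finset.card_erase_lt_of_mem hzero

theorem of_mem_of_prefixes_mem {E : Type*} {K : Subgroup (FreeGroup E)} {W : List (E × Bool)}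
    (hK : ∀ i, mk (W.take i) ∈ K) {e : E} (he : (e, true) ∈ W) : of e ∈ K := by
  obtain ⟨i, hi⟩ := List.mem_iff_getElem?.1 he
  have hstep : mk (W.take (i + 1)) = mk (W.take i) * of e := by
    rw [List.take_add_one, hi, Option.toList_some, ← mul_mk]
    rfl
  exact (K.mul_mem_cancel_left (hK i)).1 (hstep ▸ hK (i + 1))

/-- The prefixes of `W` represent the vertices of the surface bounded by `W`, and the classes of the
edges span its relative homology, which has dimension at least `card E - 2 * g`. -/
theorem exists_card_lt_card_image_prefix.{u} {E : Type u} [Fintype E] {g : ℕ} {W : List (E × Bool)}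
    (hfull : ∀ d, d ∈ W) (hmem : mk W ∈ commutatorSet (FreeGroup E) ^ g) :
    ∃ (Q : Type u) (_ : CommGroup Q) (ψ : FreeGroup E →* Q), mk W ∈ ⁅ψ.ker, ψ.ker⁆ ∧
      ∀ U : Finset Q, (∀ i, ψ (mk (W.take i)) ∈ U) → Fintype.card E < 2 * g + U.card := by
  classical
  obtain ⟨B, hBcard, hB⟩ := exists_finset_mem_commutator_of_mem_commutatorSet_pow hmem
  let α : FreeGroup E →* Multiplicative (E → ℚ) :=
    FreeGroup.lift fun e => Multiplicative.ofAdd (Pi.single e 1)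
  let S : Submodule ℚ (E → ℚ) := Submodule.span ℚ (B.image fun b => (α b).toAdd)
  let ψ : FreeGroup E →* Multiplicative ((E → ℚ) ⧸ S) :=
    (AddMonoidHom.toMultiplicative S.mkQ.toAddMonoidHom).comp α
  have hψ : ∀ x, (ψ x).toAdd = S.mkQ (α x).toAdd := fun _ => rfl
  have hker : (B : Set (FreeGroup E)) ⊆ ψ.ker := fun b hb => by
    refine (Submodule.Quotient.mk_eq_zero S).2 (Submodule.subset_span ?_)
    exact Finset.mem_coe.2 (Finset.mem_image_of_mem _ hb)
  refine ⟨_, inferInstance, ψ, hB _ hker, fun U hU => ?_⟩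
  have hfinrank : Fintype.card E ≤ Module.finrank ℚ ((E → ℚ) ⧸ S) + 2 * g := by
    rw [← Module.finrank_fintype_fun_eq_card ℚ, ← S.finrank_quotient_add_finrank]
    gcongr
    exact (finrank_span_finset_le_card _).trans (Finset.card_image_le.trans hBcard)
  let U' : Finset ((E → ℚ) ⧸ S) := U.map Multiplicative.toAdd.toEmbedding
  have hU' : ∀ i, (ψ (mk (W.take i))).toAdd ∈ U' := fun i => Finset.mem_map_of_mem _ (hU i)
  let T : Submodule ℚ ((E → ℚ) ⧸ S) := Submodule.span ℚ U'
  have hsingle : ∀ e, S.mkQ (Pi.single e 1) ∈ T := fun e => by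
    have hof := of_mem_of_prefixes_mem (K := T.toAddSubgroup.toSubgroup.comap ψ)
      (fun i => Submodule.subset_span (hU' i)) (hfull (e, true))
    simpa [hψ, α] using hof
  have hT : T = ⊤ := by
    rw [eq_top_iff, ← S.range_mkQ, LinearMap.range_eq_map, ← (Pi.basisFun ℚ E).span_eq,
      Submodule.map_span_le]
    rintro _ ⟨e, rfl⟩
    simpa using hsingle e
  have hlt := finrank_lt_card_of_span_eq_top (by simpa [← one_eq_mk] using hU' 0) hT
  rw [Finset.card_map] at hlt
  lia

end Homology

section LowSide

theorem two_mul_card_filter_of_involutive {D : Type*} [Fintype D] {ι : D → D}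
    (hι : Function.Involutive ι) {s : D → Prop} [DecidablePred s] (hs : ∀ d, s (ι d) ↔ ¬ s d) :
    2 * (Finset.univ.filter s).card = Fintype.card D := by
  have hcard : (Finset.univ.filter s).card = (Finset.univ.filter fun d => ¬ s d).card :=
    Finset.card_equiv hι.toPerm fun d => by simp [hs]
  rw [← Finset.card_univ, ← Finset.card_filter_add_card_filter_not (s := Finset.univ) s, ← hcard,
    two_mul]

/-- Think of `ν` as the successor of a dart on the boundary of a surface, and of `ι` as the
gluing of each dart `d` to its opposite, so that the tail of `d` is glued to the tail of
`ν (ι d)`. The dart is on the low side if its own tail has the smaller height `l`. -/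
def IsLowSide {D Ω : Type*} [LT Ω] (ν : Equiv.Perm D) (ι : D → D) (l : D → Ω) (d : D) : Prop :=
  l d < l (ν (ι d))

variable {D Ω : Type*} [LinearOrder Ω] {ν : Equiv.Perm D} {ι : D → D} {l : D → Ω}

theorem isLowSide_opposite_iff (hι : Function.Involutive ι) (hne : ∀ d, l (ν (ι d)) ≠ l d)
    (hsymm : ∀ d, l d < l (ν (ι d)) ↔ l (ν d) < l (ι d)) (d : D) :
    IsLowSide ν ι l (ι d) ↔ ¬ IsLowSide ν ι l d := by
  rw [IsLowSide, IsLowSide, hsymm, hι d, not_lt, (hne d).le_iff_lt]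

theorem exists_isLowSide_isLowSide_next [Finite D] (hι : Function.Involutive ι)
    (hne : ∀ d, l (ν (ι d)) ≠ l d) (hsymm : ∀ d, l d < l (ν (ι d)) ↔ l (ν d) < l (ι d))
    {Q : Type*} {u : D → Q} (hu : ∀ d, u (ν (ι d)) = u d) (d : D) :
    ∃ c, u (ν c) = u d ∧ IsLowSide ν ι l c ∧ IsLowSide ν ι l (ν c) := by
  obtain ⟨m, hm, hmin⟩ := Set.exists_min_image {c | u c = u d} l (Set.toFinite _) ⟨d, rfl⟩
  have hmin' : ∀ c, u c = u m → l m ≤ l c := fun c hc => hmin c (hc.trans hm)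
  obtain ⟨c, rfl⟩ := ν.surjective m
  have hu' : u (ι c) = u (ν c) := by simpa only [hι c] using (hu (ι c)).symm
  have hne' : l (ν c) ≠ l (ι c) := by simpa only [hι c] using hne (ι c)
  refine ⟨c, hm, (hsymm c).2 ?_, ?_⟩
  · exact (hmin' _ hu').lt_of_ne hne'
  · exact (hmin' _ (hu _)).lt_of_ne (hne _).symm

theorem card_image_le_card_isLowSide_isLowSide_next [Fintype D] (hι : Function.Involutive ι)
    (hne : ∀ d, l (ν (ι d)) ≠ l d) (hsymm : ∀ d, l d < l (ν (ι d)) ↔ l (ν d) < l (ι d))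
    {Q : Type*} [DecidableEq Q] {u : D → Q} (hu : ∀ d, u (ν (ι d)) = u d)
    [DecidablePred (IsLowSide ν ι l)] :
    (Finset.univ.image u).card ≤
      (Finset.univ.filter fun d => IsLowSide ν ι l d ∧ IsLowSide ν ι l (ν d)).card := by
  refine Finset.card_le_card_of_surjOn (fun c => u (ν c)) fun q hq => ?_
  obtain ⟨d, -, rfl⟩ := Finset.mem_image.1 hq
  obtain ⟨c, hc, hlow⟩ := exists_isLowSide_isLowSide_next hι hne hsymm hu d
  exact ⟨c, by simpa using hlow, hc⟩

end LowSide

section CyclicTransitions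

theorem exists_lt_and_not_succ {s : ℕ → Prop} {m : ℕ} (h₀ : s 0) (hm : ¬ s m) :
    ∃ k < m, s k ∧ ¬ s (k + 1) := by
  induction m with
  | zero => exact absurd h₀ hm
  | succ m ih =>
    by_cases h : s m
    · exact ⟨m, m.lt_add_one, h, hm⟩
    · obtain ⟨k, hk, hsk⟩ := ih h
      exact ⟨k, hk.trans m.lt_add_one, hsk⟩

variable {N p : ℕ} [NeZero N]

theorem card_eq_mul_card_fiber_castHom [NeZero p] (hp : p ∣ N) (r : ZMod p) :
    N = p * (Finset.univ.filter fun i : ZMod N => ZMod.castHom hp (ZMod p) i = r).card := by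
  have hfiber : ∀ r' : ZMod p,
      (Finset.univ.filter fun i : ZMod N => ZMod.castHom hp (ZMod p) i = r').card =
        (Finset.univ.filter fun i : ZMod N => ZMod.castHom hp (ZMod p) i = r).card := fun r' =>
    AddMonoidHom.card_fiber_eq_of_mem_range (ZMod.castHom hp (ZMod p))
      (ZMod.castHom_surjective hp r') (ZMod.castHom_surjective hp r)
  calc
    N = (Finset.univ : Finset (ZMod N)).card := by rw [Finset.card_univ, ZMod.card]
    _ = ∑ r', (Finset.univ.filter fun i : ZMod N => ZMod.castHom hp (ZMod p) i = r').card :=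
      Finset.card_eq_sum_card_fiberwise fun _ _ => Finset.mem_coe.2 (Finset.mem_univ _)
    _ = _ := by rw [Finset.sum_congr rfl fun r' _ => hfiber r', Finset.sum_const, smul_eq_mul,
      Finset.card_univ, ZMod.card]

/-- Walking from each of the points over `r₀` to the next point over `r₁`, one leaves `s`. -/
theorem card_fiber_castHom_le_card_and_not_succ [NeZero p] (hp : p ∣ N) {s : ZMod N → Prop}
    [DecidablePred s] {r₀ r₁ : ZMod p} (h₀ : ∀ i, ZMod.castHom hp (ZMod p) i = r₀ → s i)
    (h₁ : ∀ i, ZMod.castHom hp (ZMod p) i = r₁ → ¬ s i) :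
    (Finset.univ.filter fun i : ZMod N => ZMod.castHom hp (ZMod p) i = r₀).card ≤
      (Finset.univ.filter fun i => s i ∧ ¬ s (i + 1)).card := by
  have hexit : ∀ i, ZMod.castHom hp (ZMod p) i = r₀ →
      ∃ k < p, s (i + (k : ℕ)) ∧ ¬ s (i + (k : ℕ) + 1) := fun i hi => by
    have hend : ¬ s (i + ((r₁ - r₀).val : ℕ)) :=
      h₁ _ (by rw [map_add, map_natCast, hi, ZMod.natCast_zmod_val, add_sub_cancel])
    obtain ⟨k, hk, hsk, hsk'⟩ := exists_lt_and_not_succ (s := fun k => s (i + (k : ℕ)))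
      (by simpa using h₀ i hi) hend
    exact ⟨k, hk.trans (ZMod.val_lt _), hsk, by simpa [add_assoc] using hsk'⟩
  choose! k hklt hk hk' using hexit
  refine Finset.card_le_card_of_injOn (fun i => i + (k i : ℕ)) (fun i hi => ?_) ?_
  · have hi' := (Finset.mem_filter.1 hi).2
    simpa using ⟨hk i hi', hk' i hi'⟩
  · intro i hi j hj hij
    have hi' := (Finset.mem_filter.1 hi).2
    have hj' := (Finset.mem_filter.1 hj).2
    have hcast := congrArg (ZMod.castHom hp (ZMod p)) hij
    simp only [map_add, map_natCast, hi', hj', add_right_inj] at hcast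
    have hkk : k i = k j := by
      rw [← ZMod.val_cast_of_lt (hklt i hi'), hcast, ZMod.val_cast_of_lt (hklt j hj')]
    simpa [hkk] using hij

end CyclicTransitions

section Counting

variable {N p : ℕ} [NeZero N] {Ω : Type*} [LinearOrder Ω] {ι : ZMod N → ZMod N} {l : ZMod N → Ω}

theorem le_mul_card_isLowSide_and_not_next [NeZero p] (hp : p ∣ N)
    (hl : ∀ i j, ZMod.castHom hp (ZMod p) i = ZMod.castHom hp (ZMod p) j → l i = l j)
    (hne : ∀ i, l (ι i + 1) ≠ l i) [DecidablePred (IsLowSide (Equiv.addRight 1) ι l)] :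
    N ≤ p * (Finset.univ.filter fun i => IsLowSide (Equiv.addRight 1) ι l i ∧
      ¬ IsLowSide (Equiv.addRight 1) ι l (i + 1)).card := by
  obtain ⟨i₀, hmin⟩ := Finite.exists_min l
  obtain ⟨i₁, hmax⟩ := Finite.exists_max l
  conv_lhs => rw [card_eq_mul_card_fiber_castHom hp (ZMod.castHom hp (ZMod p) i₀)]
  refine Nat.mul_le_mul_left p (card_fiber_castHom_le_card_and_not_succ hp
    (r₁ := ZMod.castHom hp (ZMod p) i₁) (fun i hi => ?_) fun i hi => ?_)
  · exact ((hl i i₀ hi).trans_le (hmin _)).lt_of_ne (hne i).symm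
  · exact ((hmax _).trans_eq (hl i i₁ hi).symm).not_gt

theorem card_image_add_div_le [NeZero p] (hp : p ∣ N)
    (hl : ∀ i j, ZMod.castHom hp (ZMod p) i = ZMod.castHom hp (ZMod p) j → l i = l j)
    (hι : Function.Involutive ι) (hne : ∀ i, l (ι i + 1) ≠ l i)
    (hsymm : ∀ i, l i < l (ι i + 1) ↔ l (i + 1) < l (ι i))
    {Q : Type*} [DecidableEq Q] {u : ZMod N → Q} (hu : ∀ i, u (ι i + 1) = u i) :
    2 * ((Finset.univ.image u).card + N / p) ≤ N := by
  classical
  let s : ZMod N → Prop := IsLowSide (Equiv.addRight 1) ι l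
  have hhalf : 2 * (Finset.univ.filter s).card = N := by
    rw [two_mul_card_filter_of_involutive hι (s := s) (isLowSide_opposite_iff hι hne hsymm),
      ZMod.card]
  have hcorner : (Finset.univ.image u).card ≤ (Finset.univ.filter fun i => s i ∧ s (i + 1)).card :=
    card_image_le_card_isLowSide_isLowSide_next hι hne hsymm hu
  have hturn : N / p ≤ (Finset.univ.filter fun i => s i ∧ ¬ s (i + 1)).card :=
    Nat.div_le_of_le_mul (le_mul_card_isLowSide_and_not_next hp hl hne)
  have hsplit := Finset.card_filter_add_card_filter_not (s := Finset.univ.filter s)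
    fun i => s (i + 1)
  rw [Finset.filter_filter, Finset.filter_filter] at hsplit
  lia

end Counting

section CyclicWords

open FreeGroup

variable {β : Type*} {L : List (β × Bool)}

theorem isCyclicallyReduced_concat {a : β × Bool} {t : List (β × Bool)}
    (h : IsCyclicallyReduced (a :: t)) : IsCyclicallyReduced (t ++ [a]) := by
  rcases t.eq_nil_or_concat' with rfl | ⟨u, c, rfl⟩
  · exact h
  · obtain ⟨hred, hlast⟩ := isCyclicallyReduced_cons_append_iff.1 h
    obtain ⟨hhead, hred⟩ := List.isChain_cons.1 hred
    refine ⟨List.isChain_append.2 ⟨hred, List.isChain_singleton a, ?_⟩, ?_⟩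
    · simpa using hlast
    · simpa [eq_comm] using hhead

theorem isCyclicallyReduced_rotate (h : IsCyclicallyReduced L) (n : ℕ) :
    IsCyclicallyReduced (L.rotate n) := by
  induction n generalizing L with
  | zero => rwa [List.rotate_zero]
  | succ n ih =>
    cases L with
    | nil => exact h
    | cons a t =>
      rw [List.rotate_cons_succ]
      exact ih (isCyclicallyReduced_concat h)

theorem exists_rotate_eq_cons {α : Type*} {L : List α} {n : ℕ} {a : α}
    (ha : L[n % L.length]? = some a) : ∃ t, L.rotate n = a :: t ∧ L.rotate (n + 1) = t ++ [a] := by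
  have hlt : n % L.length < L.length := (List.getElem?_eq_some_iff.1 ha).1
  obtain ⟨t, ht⟩ : ∃ t, L.rotate n = a :: t := by
    rw [← List.head?_eq_some_iff, List.head?_eq_getElem?, ← List.rotate_mod,
      List.getElem?_rotate (Nat.zero_lt_of_lt hlt), zero_add, Nat.mod_mod, ha]
  exact ⟨t, ht, by rw [← List.rotate_rotate, ht, List.rotate_cons_succ, List.rotate_zero]⟩

theorem mk_rotate_succ {n : ℕ} {a : β × Bool} (ha : L[n % L.length]? = some a) :
    mk (L.rotate (n + 1)) = (mk [a])⁻¹ * mk (L.rotate n) * mk [a] := by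
  obtain ⟨t, ht, ht'⟩ := exists_rotate_eq_cons ha
  rw [ht, ht', ← mul_mk, ← List.singleton_append (l := t), ← mul_mk, inv_mul_cancel_left]

theorem mk_rotate_succ_ne_mk_rotate (hL : IsCyclicallyReduced L) {i j : ℕ} {x : β} {b : Bool}
    (hi : L[i % L.length]? = some (x, b)) (hj : L[j % L.length]? = some (x, !b)) :
    mk (L.rotate (j + 1)) ≠ mk (L.rotate i) := by
  classical
  intro heq
  have hred := isCyclicallyReduced_rotate hL
  have hrot : L.rotate (j + 1) = L.rotate i := by
    rw [← (hred _).isReduced.reduce_eq, ← (hred i).isReduced.reduce_eq]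
    exact reduce.sound heq
  obtain ⟨t, ht, -⟩ := exists_rotate_eq_cons hi
  obtain ⟨t', -, ht'⟩ := exists_rotate_eq_cons hj
  have hlast := (hred i).2 (x, !b) (by rw [← hrot, ht']; simp) (x, b) (by rw [ht]; simp)
  simp at hlast

theorem getElem?_flatten_replicate {α : Type*} {L : List α} {k n : ℕ} (hn : n < k * L.length) :
    (List.replicate k L).flatten[n]? = L[n % L.length]? := by
  induction k generalizing n with
  | zero => simp at hn
  | succ k ih =>
    rw [List.replicate_succ, List.flatten_cons, List.getElem?_append]
    split_ifs with h
    · rw [Nat.mod_eq_of_lt h]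
    · rw [not_lt] at h
      rw [ih (by rw [Nat.succ_mul] at hn; lia), ← Nat.mod_eq_sub_mod h]

end CyclicWords

section Indexing

open FreeGroup

theorem conj_lt_conj_iff {G : Type*} [Group G] [LinearOrder G] [MulLeftStrictMono G]
    [MulRightStrictMono G] {x y z : G} : z⁻¹ * x * z < z⁻¹ * y * z ↔ x < y := by
  rw [mul_lt_mul_iff_right, mul_lt_mul_iff_left]

theorem apply_val_add_one {N : ℕ} [NeZero N] {X : Type*} {F : ℕ → X} (hF : F N = F 0)
    (i : ZMod N) : F (i + 1).val = F (i.val + 1) := by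
  rw [ZMod.val_add, ZMod.val_one_eq_one_mod, Nat.add_mod_mod]
  rcases (Nat.succ_le_of_lt i.val_lt).lt_or_eq with h | h
  · rw [Nat.mod_eq_of_lt h]
  · rw [← Nat.succ_eq_add_one, h, Nat.mod_self, hF]

variable {E : Type*} {W : List (E × Bool)}

theorem exists_equiv_getElem?_val [NeZero W.length] (hnodup : W.Nodup) (hfull : ∀ d, d ∈ W) :
    ∃ θ : ZMod W.length ≃ E × Bool, ∀ i, W[i.val]? = some (θ i) := by
  let get (i : ZMod W.length) : E × Bool := W[i.val]'i.val_lt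
  have hget : Function.Bijective get := by
    refine ⟨fun i j hij => ZMod.val_injective _ (hnodup.getElem_inj_iff.1 hij), fun d => ?_⟩
    obtain ⟨k, hk, rfl⟩ := List.mem_iff_getElem.1 (hfull d)
    exact ⟨k, by simp only [get, ZMod.val_cast_of_lt hk]⟩
  exact ⟨.ofBijective get hget, fun i => List.getElem?_eq_getElem _⟩

/-- The index of the letter opposite to the one with index `i`, where the indices `D` are
identified by `θ` with the letters they carry. -/
def oppositeIndex {D : Type*} (θ : D ≃ E × Bool) (i : D) : D :=
  θ.symm ((θ i).1, !(θ i).2)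

theorem apply_oppositeIndex {D : Type*} (θ : D ≃ E × Bool) (i : D) :
    θ (oppositeIndex θ i) = ((θ i).1, !(θ i).2) :=
  θ.apply_symm_apply _

theorem oppositeIndex_involutive {D : Type*} (θ : D ≃ E × Bool) :
    Function.Involutive (oppositeIndex θ) := fun i => by
  simp [oppositeIndex]

variable {θ : ZMod W.length ≃ E × Bool} {β : Type*} {f : E → β} {L : List (β × Bool)}

theorem getElem?_oppositeIndex
    (hL : ∀ i : ZMod W.length, L[i.val % L.length]? = some (f (θ i).1, (θ i).2))
    (i : ZMod W.length) :
    L[(oppositeIndex θ i).val % L.length]? = some (f (θ i).1, !(θ i).2) := by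
  rw [hL, apply_oppositeIndex]

theorem exists_val_map_prefix_eq {Q : Type*} [Group Q] {ψ : FreeGroup E →* Q}
    (hψ : ψ (mk W) = 1) (i : ℕ) :
    ∃ j : ZMod W.length, ψ (mk (W.take j.val)) = ψ (mk (W.take i)) := by
  rcases lt_or_ge i W.length with hi | hi
  · exact ⟨i, by rw [ZMod.val_cast_of_lt hi]⟩
  · exact ⟨0, by rw [List.take_of_length_le hi, hψ, ZMod.val_zero, List.take_zero, ← one_eq_mk,
      _root_.map_one]⟩

variable [NeZero W.length]

theorem map_prefix_oppositeIndex_add_one (hθ : ∀ i, W[i.val]? = some (θ i)) {Q : Type*} [Group Q]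
    {ψ : FreeGroup E →* Q} (hW : mk W ∈ ⁅ψ.ker, ψ.ker⁆) (i : ZMod W.length) :
    ψ (mk (W.take (oppositeIndex θ i + 1).val)) = ψ (mk (W.take i.val)) := by
  obtain ⟨j, hj, hψ⟩ := exists_opposite_crossing hW
    ((hθ (oppositeIndex θ i)).trans (congrArg some (apply_oppositeIndex θ i)))
  rw [Bool.not_not] at hj
  have hjlt : j < W.length := (List.getElem?_eq_some_iff.1 hj).1
  have hji : (j : ZMod W.length) = i := by
    have := hθ j
    rw [ZMod.val_cast_of_lt hjlt, hj, Option.some_inj] at this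
    exact θ.injective this.symm
  have hclosed : ψ (mk W) = 1 := Subgroup.commutator_le_left _ _ hW
  rw [apply_val_add_one (F := fun k => ψ (mk (W.take k))) (by simp [hclosed, ← one_eq_mk]), ← hψ,
    ← hji, ZMod.val_cast_of_lt hjlt]

theorem getElem?_mod_of_map_eq_flatten_replicate {n : ℕ} (hθ : ∀ i, W[i.val]? = some (θ i))
    (hW : W.map (Prod.map f id) = (List.replicate n L).flatten) (i : ZMod W.length) :
    L[i.val % L.length]? = some (f (θ i).1, (θ i).2) := by
  have hlength : W.length = n * L.length := by simpa using congrArg List.length hW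
  rw [← getElem?_flatten_replicate (i.val_lt.trans_eq hlength), ← hW, List.getElem?_map, hθ]
  rfl

theorem rotate_val_add_one (hdvd : L.length ∣ W.length) (i : ZMod W.length) :
    L.rotate (i + 1).val = L.rotate (i.val + 1) :=
  apply_val_add_one (F := L.rotate)
    (by rw [← L.rotate_mod, Nat.mod_eq_zero_of_dvd hdvd]) i

theorem rotate_val_eq_of_castHom_eq (hdvd : L.length ∣ W.length) {i j : ZMod W.length}
    (hij : ZMod.castHom hdvd (ZMod L.length) i = ZMod.castHom hdvd (ZMod L.length) j) :
    L.rotate i.val = L.rotate j.val := by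
  rw [← ZMod.natCast_zmod_val i, ← ZMod.natCast_zmod_val j, map_natCast, map_natCast,
    ZMod.natCast_eq_natCast_iff'] at hij
  rw [← L.rotate_mod, hij, L.rotate_mod]

theorem mk_rotate_oppositeIndex_add_one_ne (hcyc : IsCyclicallyReduced L)
    (hdvd : L.length ∣ W.length)
    (hL : ∀ i : ZMod W.length, L[i.val % L.length]? = some (f (θ i).1, (θ i).2))
    (i : ZMod W.length) :
    mk (L.rotate (oppositeIndex θ i + 1).val) ≠ mk (L.rotate i.val) := by
  rw [rotate_val_add_one hdvd]
  exact mk_rotate_succ_ne_mk_rotate hcyc (hL i) (getElem?_oppositeIndex hL i)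

theorem mk_rotate_lt_iff [LinearOrder (FreeGroup β)] [MulLeftStrictMono (FreeGroup β)]
    [MulRightStrictMono (FreeGroup β)] (hdvd : L.length ∣ W.length)
    (hL : ∀ i : ZMod W.length, L[i.val % L.length]? = some (f (θ i).1, (θ i).2))
    (i : ZMod W.length) :
    mk (L.rotate i.val) < mk (L.rotate (oppositeIndex θ i + 1).val) ↔
      mk (L.rotate (i + 1).val) < mk (L.rotate (oppositeIndex θ i).val) := by
  have hinv : mk [(f (θ i).1, !(θ i).2)] = (mk [(f (θ i).1, (θ i).2)])⁻¹ := rfl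
  rw [rotate_val_add_one hdvd, rotate_val_add_one hdvd, mk_rotate_succ (hL i),
    mk_rotate_succ (getElem?_oppositeIndex hL i), hinv, inv_inv,
    ← conj_lt_conj_iff (z := mk [(f (θ i).1, (θ i).2)])]
  simp only [mul_assoc, inv_mul_cancel, mul_one, inv_mul_cancel_left]

end Indexing

section PowerInequality

open FreeGroup
open scoped Pointwise

variable {β : Type*} {L : List (β × Bool)}

theorem HasQuadraticLift.lt_two_mul {n g : ℕ} (hn : n ≠ 0) (hL : IsCyclicallyReduced L)
    (hne : L ≠ []) (hlift : HasQuadraticLift g (List.replicate n L).flatten) : n < 2 * g := by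
  classical
  obtain ⟨E, _, f, W, hW, hnodup, hfull, hmem⟩ := hlift.exists_full
  have hlength : W.length = n * L.length := by simpa using congrArg List.length hW
  have : NeZero L.length := ⟨by simpa using hne⟩
  have : NeZero W.length := ⟨by simpa [hlength] using ⟨hn, hne⟩⟩
  obtain ⟨Q, _, ψ, hψ, hcard⟩ := exists_card_lt_card_image_prefix hfull hmem
  obtain ⟨θ, hθ⟩ := exists_equiv_getElem?_val hnodup hfull
  have hdvd : L.length ∣ W.length := Dvd.intro_left n hlength.symm
  have hletter := getElem?_mod_of_map_eq_flatten_replicate hθ hW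
  obtain ⟨_, _, _⟩ := freeGroup_exists_biorder β
  let u : ZMod W.length → Q := fun i => ψ (mk (W.take i.val))
  have hcount := card_image_add_div_le (l := fun i => mk (L.rotate i.val)) (u := u) hdvd
    (fun i j hij => congrArg mk (rotate_val_eq_of_castHom_eq hdvd hij))
    (oppositeIndex_involutive θ) (mk_rotate_oppositeIndex_add_one_ne hL hdvd hletter)
    (mk_rotate_lt_iff hdvd hletter) (map_prefix_oppositeIndex_add_one hθ hψ)
  have hprefix : ∀ i, ψ (mk (W.take i)) ∈ Finset.univ.image u := fun i => by
    obtain ⟨j, hj⟩ := exists_val_map_prefix_eq (Subgroup.commutator_le_left _ _ hψ) i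
    exact Finset.mem_image.2 ⟨j, Finset.mem_univ j, hj⟩
  have hE : W.length = 2 * Fintype.card E := by
    rw [← ZMod.card W.length, Fintype.card_congr θ, Fintype.card_prod, Fintype.card_bool, mul_comm]
  have hdiv : W.length / L.length = n := by
    rw [hlength, Nat.mul_div_cancel _ (NeZero.pos _)]
  have := hcard _ hprefix
  lia

theorem eq_one_of_pow_mem_commutatorSet_pow {z : FreeGroup β} {g n : ℕ} (hn : n ≠ 0)
    (hgn : 2 * g ≤ n) (h : z ^ n ∈ commutatorSet (FreeGroup β) ^ g) : z = 1 := by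
  classical
  let L := reduceCyclically z.toWord
  let y := mk (reduceCyclically.conjugator z.toWord)
  have hL : IsCyclicallyReduced L := reduceCyclically.isCyclicallyReduced isReduced_toWord
  have hz : z = y * mk L * y⁻¹ := by
    rw [inv_mk, mul_mk, mul_mk, reduceCyclically.conj_conjugator_reduceCyclically, mk_toWord]
  by_cases hne : L = []
  · rw [hz, hne, ← one_eq_mk, mul_one, mul_inv_cancel]
  · have hmem : mk (List.replicate n L).flatten ∈ commutatorSet (FreeGroup β) ^ g := by
      have hconj := map_mem_commutatorSet_pow (MulAut.conj y⁻¹).toMonoidHom h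
      rw [hz, conj_pow, pow_mk] at hconj
      simpa [mul_assoc] using hconj
    have hlift := hasQuadraticLift_of_isReduced (hL.flatten_replicate n).isReduced hmem
    exact absurd hgn (hlift.lt_two_mul hn hL hne).not_ge

end PowerInequality

section Presentation

open scoped Pointwise commutatorElement

theorem of_four_pow_mem_commutatorSet_pow :
    (PresentedGroup.of 4 : PresentedGroup surfaceLikeRel) ^ 4 ∈
      commutatorSet (PresentedGroup surfaceLikeRel) ^ 2 := by
  let x (i : Fin 5) : PresentedGroup surfaceLikeRel := PresentedGroup.of i
  have hrel : (x 0)⁻¹ * (x 1)⁻¹ * x 0 * x 1 * ((x 2)⁻¹ * (x 3)⁻¹ * x 2 * x 3) * (x 4 ^ 4)⁻¹ = 1 :=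
    PresentedGroup.one_of_mem (rels := surfaceLikeRel) (Set.mem_singleton _)
  have hpow : x 4 ^ 4 = ⁅(x 0)⁻¹, (x 1)⁻¹⁆ * ⁅(x 2)⁻¹, (x 3)⁻¹⁆ := by
    simpa only [commutatorElement_def, inv_inv] using (mul_inv_eq_one.1 hrel).symm
  rw [sq, show PresentedGroup.of 4 = x 4 from rfl, hpow]
  exact Set.mul_mem_mul (commutator_mem_commutatorSet _ _) (commutator_mem_commutatorSet _ _)

theorem of_four_ne_one : (PresentedGroup.of 4 : PresentedGroup surfaceLikeRel) ≠ 1 := by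
  let f : Fin 5 → Multiplicative (ZMod 4) := Pi.mulSingle 4 (Multiplicative.ofAdd 1)
  have hf : ∀ r ∈ surfaceLikeRel, FreeGroup.lift f r = 1 := by
    rintro _ rfl
    simp only [map_mul, map_inv, map_pow, FreeGroup.lift_apply_of]
    decide
  intro h
  have hone := congrArg (PresentedGroup.toGroup hf) h
  rw [PresentedGroup.toGroup.of, map_one] at hone
  exact absurd hone (by decide)

end Presentation

/-- For `G = ⟨a,b,c,d,z ∣ [a,b][c,d] = z⁴⟩`, every homomorphism to a free group
kills `z`; consequently `G` is not residually free. -/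
theorem not_residually_free_of_fourth_power_relator :
    (∀ (β : Type) (φ : PresentedGroup surfaceLikeRel →* FreeGroup β),
      φ (PresentedGroup.of 4) = 1) ∧
    ¬ (∀ g : PresentedGroup surfaceLikeRel, g ≠ 1 →
        ∃ (β : Type) (φ : PresentedGroup surfaceLikeRel →* FreeGroup β), φ g ≠ 1) := by
  have hkill : ∀ (β : Type) (φ : PresentedGroup surfaceLikeRel →* FreeGroup β),
      φ (PresentedGroup.of 4) = 1 := fun β φ => by
    have hpow := map_mem_commutatorSet_pow φ of_four_pow_mem_commutatorSet_pow
    rw [map_pow] at hpow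
    exact eq_one_of_pow_mem_commutatorSet_pow four_ne_zero (by norm_num) hpow
  refine ⟨hkill, fun hresid => ?_⟩
  obtain ⟨β, φ, hφ⟩ := hresid _ of_four_ne_one
  exact hφ (hkill β φ)
end

section
/- Let A and B be locally indicable groups, r a cyclically reduced word in A ∗ B of (free product) length at least 2, and G = (A ∗ B)/⟨⟨r⟩⟩. Then the canonical maps A → G and B → G are injective. -/
open Monoid

/-- A group is locally indicable if every non-trivial finitely generated subgroup
surjects onto `ℤ`. -/
def LocallyIndicable (G : Type) [Group G] : Prop :=
  ∀ H : Subgroup G, H ≠ ⊥ → H.FG →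
    ∃ f : H →* Multiplicative ℤ, Function.Surjective f

/-- An element of a free product `A ∗ B` is a cyclically reduced word of length at
least `2`: it is an alternating product of non-trivial syllables, with first and last
syllables in different factors (hence of even length `2n ≥ 2`). -/
def CyclicallyReducedGE2 {A B : Type} [Group A] [Group B] (r : Coprod A B) : Prop :=
  ∃ n : ℕ, 0 < n ∧
    ((∃ (a : Fin n → A) (b : Fin n → B), (∀ i, a i ≠ 1) ∧ (∀ i, b i ≠ 1) ∧
        r = (List.ofFn fun i => Coprod.inl (a i) * Coprod.inr (b i)).prod) ∨
     (∃ (a : Fin n → A) (b : Fin n → B), (∀ i, a i ≠ 1) ∧ (∀ i, b i ≠ 1) ∧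
        r = (List.ofFn fun i => Coprod.inr (b i) * Coprod.inl (a i)).prod))

/-!
The theorem is equivalent to the solvability, over `A ∗ B`, of the equation
`∏ x aᵢ x⁻¹ bᵢ = 1` in an unknown `x`, since a solution conjugates `A` to a position in which it
satisfies the relation with `B`. By induction on the length, every cyclically reduced equation
`w = 1` over a locally indicable group `C` is solvable in an overgroup of `C`.

Given `φ : C →* ℤ` and `p : ℤ` for which `w` has total weight zero, the substitution
`x ↦ x t ^ p`, `c ↦ c t ^ φ c`, with `t` commuting with `C`, rewrites `w` in the unknowns
`t ^ k x t ^ (-k)`. If at least two of them occur, then in terms of a single one of them the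
equation is shorter, and its coefficients lie in the free product of `C` and a free group, which is
again locally indicable. So the induction hypothesis shows that the unknowns other than an extreme
one are free over `C`, and an HNN extension provides `t`.

Among the combinations of two pairs `(φ, p)` one always has total weight zero. If two cyclically
consecutive letters have the same sign, a substitution `x ↦ x k` makes the coefficient between them
trivial, and the pairs `(0, 1)` and `(φ, 0)` work. If the signs alternate, the equation is replaced
by one over the free product of the two groups generated by the coefficients following `x` and
those following `x⁻¹`, where the pairs `(φ, 0)` come from the two factors.
-/

universe u v

theorem exists_hnnExtension {K : Type v} {G : Type u} [Group K] [Group G] {f g : K →* G}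
    (hf : Function.Injective f) (hg : Function.Injective g) :
    ∃ (Q : Type u) (_ : Group Q) (i : G →* Q) (t : Q) (deg : Q →* Multiplicative ℤ),
      Function.Injective i ∧ (∀ k, t * i (f k) * t⁻¹ = i (g k)) ∧
        deg t = Multiplicative.ofAdd 1 ∧ ∀ x, deg (i x) = 1 := by
  let φ : f.range ≃* g.range := (MonoidHom.ofInjective hf).symm.trans (MonoidHom.ofInjective hg)
  have hφ (k : K) : φ ⟨f k, k, rfl⟩ = ⟨g k, k, rfl⟩ :=
    congrArg (MonoidHom.ofInjective hg) ((MonoidHom.ofInjective hf).symm_apply_apply k)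
  refine ⟨HNNExtension G f.range g.range φ, inferInstance, HNNExtension.of, HNNExtension.t,
    HNNExtension.lift 1 (Multiplicative.ofAdd 1) (by simp), HNNExtension.of_injective _,
    fun k => ?_, by simp, by simp⟩
  rw [mul_inv_eq_iff_eq_mul, HNNExtension.t_mul_of (φ := φ) ⟨f k, k, rfl⟩, hφ]

theorem exists_amalgam {H : Type v} {G K : Type u} [Group H] [Group G] [Group K]
    {f : H →* G} {g : H →* K} (hf : Function.Injective f) (hg : Function.Injective g) :
    ∃ (Q : Type u) (_ : Group Q) (i : G →* Q) (j : K →* Q),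
      Function.Injective i ∧ Function.Injective j ∧ i.comp f = j.comp g := by
  obtain ⟨Q, _, i, t, -, hi, ht, -⟩ := exists_hnnExtension
    (f := (Coprod.inl : G →* Coprod G K).comp f) (g := (Coprod.inr : K →* Coprod G K).comp g)
    (Coprod.inl_injective.comp hf) (Coprod.inr_injective.comp hg)
  refine ⟨Q, inferInstance, (MulAut.conj t).toMonoidHom.comp (i.comp Coprod.inl),
    i.comp Coprod.inr, ?_, hi.comp Coprod.inr_injective, MonoidHom.ext ht⟩
  exact (MulAut.conj t).injective.comp (hi.comp Coprod.inl_injective)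

/-! ### Locally indicable groups -/

namespace LocallyIndicable

section

variable {G P : Type} [Group G] [Group P]

theorem exists_surjective_of_hom_ne_one {H : Type*} [Group H] [Group.FG H]
    (hP : LocallyIndicable P) (g : H →* P) (hg : g ≠ 1) :
    ∃ f : H →* Multiplicative ℤ, Function.Surjective f := by
  have hrange : g.range ≠ ⊥ := by rwa [Ne, MonoidHom.range_eq_bot_iff]
  obtain ⟨f, hf⟩ := hP g.range hrange (Group.fg_iff_subgroup_fg _ |>.1 inferInstance)
  exact ⟨f.comp g.rangeRestrict, hf.comp g.rangeRestrict_surjective⟩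

theorem of_injective (hP : LocallyIndicable P) (f : G →* P) (hf : Function.Injective f) :
    LocallyIndicable G := fun H hH hfg => by
  have := (Group.fg_iff_subgroup_fg H).2 hfg
  refine hP.exists_surjective_of_hom_ne_one (f.comp H.subtype) fun h1 => hH ?_
  refine (Subgroup.eq_bot_iff_forall H).2 fun x hx => hf ?_
  simpa using DFunLike.congr_fun h1 ⟨x, hx⟩

theorem subgroup (hG : LocallyIndicable G) (H : Subgroup G) : LocallyIndicable H :=
  hG.of_injective H.subtype H.subtype_injective

theorem of_ker (f : G →* P) (hP : LocallyIndicable P) (hker : LocallyIndicable f.ker) :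
    LocallyIndicable G := fun H hH hfg => by
  have := (Group.fg_iff_subgroup_fg H).2 hfg
  by_cases hf : f.comp H.subtype = 1
  · have hle : H ≤ f.ker := fun x hx => MonoidHom.mem_ker.2 (DFunLike.congr_fun hf ⟨x, hx⟩)
    refine hker.exists_surjective_of_hom_ne_one (Subgroup.inclusion hle) fun h1 => hH ?_
    refine (Subgroup.eq_bot_iff_forall H).2 fun x hx => ?_
    exact congrArg Subtype.val (DFunLike.congr_fun h1 ⟨x, hx⟩)
  · exact hP.exists_surjective_of_hom_ne_one _ hf

theorem semidirectProduct {φ : P →* MulAut G} (hG : LocallyIndicable G)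
    (hP : LocallyIndicable P) : LocallyIndicable (G ⋊[φ] P) := by
  refine of_ker SemidirectProduct.rightHom hP ?_
  rw [← SemidirectProduct.range_inl_eq_ker_rightHom]
  let e := MonoidHom.ofInjective (SemidirectProduct.inl_injective (φ := φ))
  exact hG.of_injective e.symm.toMonoidHom e.symm.injective

theorem prod (hG : LocallyIndicable G) (hP : LocallyIndicable P) : LocallyIndicable (G × P) := by
  refine of_ker (MonoidHom.snd G P) hP (hG.of_injective ((MonoidHom.fst G P).comp
    (MonoidHom.snd G P).ker.subtype) fun x y hxy => ?_)
  exact Subtype.ext (Prod.ext hxy (x.2.trans y.2.symm))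

theorem exists_hom_closure_ne_one (hG : LocallyIndicable G) {S : Set G} (hfin : S.Finite)
    (hS : ∃ x ∈ S, x ≠ 1) : ∃ f : Subgroup.closure S →* Multiplicative ℤ,
      ∃ y : Subgroup.closure S, (y : G) ∈ S ∧ f y ≠ 1 := by
  obtain ⟨x, hxS, hx⟩ := hS
  have hne : Subgroup.closure S ≠ ⊥ := fun h =>
    hx ((Subgroup.eq_bot_iff_forall _).1 h x (Subgroup.subset_closure hxS))
  obtain ⟨f, hf⟩ := hG _ hne ((Subgroup.fg_iff _).2 ⟨S, rfl, hfin⟩)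
  by_contra! h
  have hf1 : f = 1 := MonoidHom.eq_of_eqOn_dense (Subgroup.closure_closure_coe_preimage)
    fun y hy => h f y hy
  obtain ⟨y, hy⟩ := hf (Multiplicative.ofAdd 1)
  simp [hf1, ← ofAdd_zero] at hy

end

theorem freeGroup (X : Type) : LocallyIndicable (FreeGroup X) := fun H hH _ => by
  let e := IsFreeGroup.toFreeGroup H
  have : Nonempty (IsFreeGroup.Generators H) := by
    by_contra hempty
    rw [not_nonempty_iff] at hempty
    have := e.toEquiv.subsingleton
    exact hH (Subgroup.eq_bot_of_subsingleton H)
  obtain ⟨x⟩ := this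
  let f : FreeGroup (IsFreeGroup.Generators H) →* Multiplicative ℤ :=
    FreeGroup.lift fun _ => Multiplicative.ofAdd 1
  refine ⟨f.comp e.toMonoidHom, fun n => ⟨e.symm (FreeGroup.of x ^ n.toAdd), ?_⟩⟩
  simp [f, ← ofAdd_zsmul]

section

variable {P : Type} [Group P] (X : Type)

/-- `P ∗ F(X)` is the semidirect product of `P` and the free group on the conjugates `p x p⁻¹`. -/
theorem coprod_freeGroup (hP : LocallyIndicable P) :
    LocallyIndicable (Coprod P (FreeGroup X)) := by
  let translate (p : P) : P × X ≃ P × X := (Equiv.mulLeft p).prodCongr (Equiv.refl X)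
  let φ : P →* MulAut (FreeGroup (P × X)) :=
    { toFun p := FreeGroup.freeGroupCongr (translate p)
      map_one' := by ext; simp [translate]
      map_mul' p q := MulEquiv.toMonoidHom_injective <| FreeGroup.ext_hom _ _ fun x => by
        simp [translate, mul_assoc, Prod.map] }
  let embed : Coprod P (FreeGroup X) →* FreeGroup (P × X) ⋊[φ] P :=
    Coprod.lift SemidirectProduct.inr
      (FreeGroup.lift fun x => SemidirectProduct.inl (FreeGroup.of (1, x)))
  let conjugate (y : P × X) : Coprod P (FreeGroup X) :=
    Coprod.inl y.1 * Coprod.inr (FreeGroup.of y.2) * (Coprod.inl y.1)⁻¹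
  let retract : FreeGroup (P × X) ⋊[φ] P →* Coprod P (FreeGroup X) :=
    SemidirectProduct.lift (FreeGroup.lift conjugate) Coprod.inl fun p =>
      FreeGroup.ext_hom _ _ fun y => by simp [φ, translate, conjugate, mul_assoc]
  have hretract : retract.comp embed = MonoidHom.id _ := by
    ext <;> simp [embed, retract, conjugate]
  exact ((freeGroup _).semidirectProduct hP).of_injective embed
    (Function.LeftInverse.injective (g := retract) (DFunLike.congr_fun hretract))

/-- `a ↦ x (a, 1) x⁻¹`, `b ↦ (1, b)` embeds `A ∗ B` in `(A × B) ∗ ⟨x⟩`. -/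
theorem coprod {A B : Type} [Group A] [Group B] (hA : LocallyIndicable A)
    (hB : LocallyIndicable B) : LocallyIndicable (Coprod A B) := by
  let x : Coprod (A × B) (FreeGroup Unit) := Coprod.inr (FreeGroup.of ())
  let embed : Coprod A B →* Coprod (A × B) (FreeGroup Unit) :=
    Coprod.lift ((MulAut.conj x).toMonoidHom.comp (Coprod.inl.comp (MonoidHom.inl A B)))
      (Coprod.inl.comp (MonoidHom.inr A B))
  obtain ⟨Q, _, i, t, -, hi, ht, -⟩ := exists_hnnExtension
    (f := MonoidHom.inr (Coprod A B) A) (g := (MonoidHom.inl (Coprod A B) A).comp Coprod.inl)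
    (fun a a' h => congrArg Prod.snd h)
    (fun a a' h => Coprod.inl_injective (congrArg Prod.fst h))
  let ψ : Coprod (A × B) (FreeGroup Unit) →* Q :=
    Coprod.lift (i.comp ((Coprod.inr.comp (MonoidHom.snd A B)).prod (MonoidHom.fst A B)))
      (FreeGroup.lift fun _ => t)
  have hψ : ψ.comp embed = i.comp (MonoidHom.inl (Coprod A B) A) := by
    refine Coprod.hom_ext (MonoidHom.ext fun a => ?_) (MonoidHom.ext fun b => ?_)
    · simpa [ψ, embed, x] using ht a
    · simp [ψ, embed]
  refine ((hA.prod hB).coprod_freeGroup Unit).of_injective embed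
    (Function.Injective.of_comp (f := ψ) ?_)
  rw [← MonoidHom.coe_comp, hψ]
  exact hi.comp fun y z h => congrArg Prod.fst h

end

end LocallyIndicable

/-! ### Equations over groups -/

section CyclicChains

variable {α : Type*} {R : α → α → Prop}

theorem isChain_append_self_rotate {u v : List α} (h : ((u ++ v) ++ (u ++ v)).IsChain R) :
    ((v ++ u) ++ (v ++ u)).IsChain R := by
  rcases eq_or_ne (u ++ v) [] with hnil | hne
  · obtain ⟨rfl, rfl⟩ := List.append_eq_nil_iff.1 hnil
    exact .nil
  · have hleft : (v ++ (u ++ v)).IsChain R := by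
      rw [List.append_assoc] at h
      exact h.right_of_append
    have hright : ((u ++ v) ++ u).IsChain R := by
      rw [← List.append_assoc] at h
      exact h.left_of_append
    simpa using hleft.append_overlap hright hne

theorem exists_rel_of_isChain_append_self {w : List α} (h : (w ++ w).IsChain R) {x : α}
    (hx : x ∈ w) : ∃ y ∈ w, R x y := by
  obtain ⟨s, t, rfl⟩ := List.append_of_mem hx
  have hs : (s ++ (x :: (t ++ (s ++ x :: t)))).IsChain R := by simpa using h
  cases t with
  | nil =>
    cases s with
    | nil => exact ⟨x, by simp, (List.isChain_cons_cons.1 hs.right_of_append).1⟩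
    | cons y s => exact ⟨y, by simp, (List.isChain_cons_cons.1 hs.right_of_append).1⟩
  | cons y t => exact ⟨y, by simp, (List.isChain_cons_cons.1 hs.right_of_append).1⟩

end CyclicChains

/-- The word `x ^ ε₁ * c₁ * ⋯ * x ^ εₙ * cₙ` in an unknown `x` with coefficients in `C`, encoded as
the list of the pairs `(εᵢ, cᵢ)`; it stands for the equation `x ^ ε₁ * c₁ * ⋯ * x ^ εₙ * cₙ = 1`. -/
abbrev GroupEquation (C : Type) := List (ℤˣ × C)

namespace GroupEquation

variable {C D Q P : Type} [Group C] [Group D] [Group Q] [Group P]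

/-- The value of the left-hand side of an equation at `x`, with coefficients read in `Q` through
`j`. -/
def eval (j : C →* Q) (x : Q) (w : GroupEquation C) : Q :=
  (w.map fun a => x ^ (a.1 : ℤ) * j a.2).prod

@[simp]
theorem eval_nil (j : C →* Q) (x : Q) : eval j x [] = 1 := rfl

@[simp]
theorem eval_cons (j : C →* Q) (x : Q) (a : ℤˣ × C) (w : GroupEquation C) :
    eval j x (a :: w) = x ^ (a.1 : ℤ) * j a.2 * eval j x w := by simp [eval]

theorem map_eval (f : Q →* P) (j : C →* Q) (x : Q) (w : GroupEquation C) :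
    f (eval j x w) = eval (f.comp j) (f x) w := by
  simp [eval, map_list_prod, Function.comp_def]

theorem eval_map (i : D →* C) (j : C →* Q) (x : Q) (w : GroupEquation D) :
    eval j x (w.map (Prod.map id i)) = eval (j.comp i) x w := by
  simp [eval, Function.comp_def]

/-- No subword `x x⁻¹` or `x⁻¹ x` occurs. -/
def IsReduced (w : GroupEquation C) : Prop :=
  w.IsChain fun a b => a.2 = 1 → a.1 = b.1

/-- All rotations of `w` are reduced. Note that `[(ε, 1)]` is cyclically reduced. -/
def IsCyclicallyReduced (w : GroupEquation C) : Prop := IsReduced (w ++ w)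

/-- `w = 1` has a solution in some group containing the coefficient group. -/
def Solvable (w : GroupEquation C) : Prop :=
  ∃ (Q : Type) (_ : Group Q) (j : C →* Q) (e : Q), Function.Injective j ∧ eval j e w = 1

theorem IsCyclicallyReduced.rotate {u v : GroupEquation C} (h : IsCyclicallyReduced (u ++ v)) :
    IsCyclicallyReduced (v ++ u) :=
  isChain_append_self_rotate h

/-- A solution over the subgroup `D` extends to `C` by amalgamating with `C` over `D`. -/
theorem Solvable.map_of_injective {w : GroupEquation D} (h : Solvable w) {i : D →* C}
    (hi : Function.Injective i) : Solvable (w.map (Prod.map id i)) := by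
  obtain ⟨Q, _, j, e, hj, he⟩ := h
  obtain ⟨P, _, f, g, -, hg, hfg⟩ := exists_amalgam hj hi
  refine ⟨P, inferInstance, g, f e, hg, ?_⟩
  rw [eval_map, ← hfg, ← map_eval, he, map_one]

theorem isCyclicallyReduced_of_forall_ne_one {w : GroupEquation C} (h : ∀ a ∈ w, a.2 ≠ 1) :
    IsCyclicallyReduced w := by
  refine List.isChain_iff_forall_rel_of_append_cons_cons.2 fun a b s t hst ha => ?_
  have hmem : a ∈ w ++ w := by simp [hst]
  exact absurd ha (h a (by simpa using hmem))

/-- Britton's lemma for the HNN extension of `C` along the trivial subgroup. -/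
theorem of_mul_eval_t_ne_one {w : GroupEquation C} (hw : IsReduced w) (hne : w ≠ []) (c : C) :
    (HNNExtension.of c : HNNExtension C ⊥ ⊥ (MulEquiv.refl _)) *
      eval HNNExtension.of HNNExtension.t w ≠ 1 := by
  intro h
  let W : HNNExtension.NormalWord.ReducedWord C ⊥ ⊥ :=
    { head := c
      toList := w
      chain := hw.imp fun a b hab ha => hab (by simpa [HNNExtension.toSubgroup] using ha) }
  have hW : W.prod (MulEquiv.refl _) = 1 := h
  refine hne (HNNExtension.ReducedWord.toList_eq_nil_of_mem_of_range (MulEquiv.refl _) W ?_)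
  rw [hW]
  exact one_mem _

/-- The induction hypothesis: nonempty cyclically reduced equations of length less than `n` over
locally indicable groups are solvable. -/
def ShortEquationsSolvable (n : ℕ) : Prop :=
  ∀ (C : Type) [Group C], LocallyIndicable C → ∀ w : GroupEquation C, w ≠ [] →
    IsCyclicallyReduced w → w.length < n → Solvable w

end GroupEquation

/-! ### Equations in several unknowns -/

theorem exists_eq_append_flatMap {α : Type*} (p : α → Prop) (l : List α) :
    ∃ (s : List α) (L : List (α × List α)), l = s ++ L.flatMap (fun b => b.1 :: b.2) ∧
      (∀ a ∈ s, ¬ p a) ∧ ∀ b ∈ L, p b.1 ∧ ∀ a ∈ b.2, ¬ p a := by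
  induction l with
  | nil => exact ⟨[], [], by simp⟩
  | cons a l ih =>
    obtain ⟨s, L, rfl, hs, hL⟩ := ih
    by_cases ha : p a
    · exact ⟨[], (a, s) :: L, by simp, by simp, List.forall_mem_cons.2 ⟨⟨ha, hs⟩, hL⟩⟩
    · exact ⟨a :: s, L, by simp, List.forall_mem_cons.2 ⟨ha, hs⟩, hL⟩

theorem length_lt_length_flatMap {α : Type*} {L : List (α × List α)} (h : ∃ b ∈ L, b.2 ≠ []) :
    L.length < (L.flatMap fun b => b.1 :: b.2).length := by
  obtain ⟨b, hb, hne⟩ := h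
  have := List.sum_lt_sum (l := L) (fun _ => 1) (fun b => (b.1 :: b.2).length)
    (fun b _ => by simp) ⟨b, hb, by simpa using List.length_pos_iff.2 hne⟩
  simpa [List.length_flatMap] using this

/-- An equation in the unknowns `x i`, `i : ι`, with coefficients in `C`: the list of the triples
`(i, ε, c)` stands for the product of the `x i ^ ε * c`. -/
abbrev LabelledEquation (ι C : Type) := List (ι × ℤˣ × C)

namespace LabelledEquation

open GroupEquation

variable {ι κ C Q : Type} [Group C] [Group Q]

/-- The value of the left-hand side of a labelled equation at `X`. -/
def eval (j : C →* Q) (X : ι → Q) (W : LabelledEquation ι C) : Q :=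
  (W.map fun a => X a.1 ^ (a.2.1 : ℤ) * j a.2.2).prod

@[simp]
theorem eval_nil (j : C →* Q) (X : ι → Q) : eval j X [] = 1 := rfl

@[simp]
theorem eval_cons (j : C →* Q) (X : ι → Q) (a : ι × ℤˣ × C) (W : LabelledEquation ι C) :
    eval j X (a :: W) = X a.1 ^ (a.2.1 : ℤ) * j a.2.2 * eval j X W := by simp [eval]

@[simp]
theorem eval_append (j : C →* Q) (X : ι → Q) (W W' : LabelledEquation ι C) :
    eval j X (W ++ W') = eval j X W * eval j X W' := by simp [eval]

theorem map_eval {P : Type} [Group P] (f : Q →* P) (j : C →* Q) (X : ι → Q)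
    (W : LabelledEquation ι C) : f (eval j X W) = eval (f.comp j) (f ∘ X) W := by
  simp [eval, map_list_prod, Function.comp_def]

theorem eval_const (j : C →* Q) (x : Q) (W : LabelledEquation ι C) :
    eval j (fun _ => x) W = GroupEquation.eval j x (W.map Prod.snd) := by
  simp [eval, GroupEquation.eval, Function.comp_def]

theorem eval_congr (j : C →* Q) {X Y : ι → Q} {W : LabelledEquation ι C}
    (h : ∀ a ∈ W, X a.1 = Y a.1) : eval j X W = eval j Y W := by
  refine congrArg List.prod (List.map_congr_left fun a ha => ?_)
  rw [h a ha]

/-- The left-hand side of `W` as an element of the free product of `C` and the free group on the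
unknowns. -/
def universal (W : LabelledEquation ι C) : Coprod C (FreeGroup ι) :=
  eval Coprod.inl (fun i => Coprod.inr (FreeGroup.of i)) W

theorem map_universal (J : Coprod C (FreeGroup ι) →* Q) (W : LabelledEquation ι C) :
    J W.universal = eval (J.comp Coprod.inl) (fun i => J (Coprod.inr (FreeGroup.of i))) W :=
  map_eval _ _ _ _

/-- The letter `x μ ^ ε * (c * W)` of the equation in the single unknown `x μ` obtained by moving
all other unknowns into the coefficient group. -/
def coarsen (b : (ι × ℤˣ × C) × LabelledEquation ι C) : ℤˣ × Coprod C (FreeGroup ι) :=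
  (b.1.2.1, Coprod.inl b.1.2.2 * universal b.2)

theorem eval_map_coarsen [DecidableEq ι] {μ : ι} (J : Coprod C (FreeGroup ι) →* Q) (y : Q)
    {L : List ((ι × ℤˣ × C) × LabelledEquation ι C)}
    (hL : ∀ b ∈ L, b.1.1 = μ ∧ ∀ a ∈ b.2, a.1 ≠ μ) :
    GroupEquation.eval J y (L.map coarsen) =
      eval (J.comp Coprod.inl) (Function.update (fun i => J (Coprod.inr (FreeGroup.of i))) μ y)
        (L.flatMap fun b => b.1 :: b.2) := by
  induction L with
  | nil => rfl
  | cons b L ih =>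
    obtain ⟨⟨hb, hne⟩, hL⟩ := List.forall_mem_cons.1 hL
    let X : ι → Q := fun i => J (Coprod.inr (FreeGroup.of i))
    have htail : eval (J.comp Coprod.inl) (Function.update X μ y) b.2 =
        eval (J.comp Coprod.inl) X b.2 :=
      eval_congr _ fun a ha => Function.update_of_ne (hne a ha) _ _
    simp [coarsen, hb, ih hL, htail, map_universal, mul_assoc, X]

theorem inl_mul_universal_ne_one {W : LabelledEquation ι C} (hW : IsReduced (W.map Prod.snd))
    (hne : W ≠ []) (c : C) : Coprod.inl c * W.universal ≠ 1 := by
  intro h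
  let collapse : Coprod C (FreeGroup ι) →* HNNExtension C ⊥ ⊥ (MulEquiv.refl _) :=
    Coprod.lift HNNExtension.of (FreeGroup.lift fun _ => HNNExtension.t)
  refine of_mul_eval_t_ne_one hW (by simpa using hne) c ?_
  have := congrArg collapse h
  simpa [map_universal, collapse, eval_const] using this

theorem isReduced_map_coarsen {L : List ((ι × ℤˣ × C) × LabelledEquation ι C)}
    (h : IsReduced ((L.flatMap fun b => b.1 :: b.2).map Prod.snd)) :
    IsReduced (L.map coarsen) := by
  refine (List.isChain_map _).2 (List.isChain_iff_forall_rel_of_append_cons_cons.2 ?_)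
  rintro ⟨a, W⟩ b s t rfl hone
  have hinfix : IsReduced (((a :: W) ++ (b.1 :: b.2)).map Prod.snd) :=
    h.infix ⟨(s.flatMap fun b => b.1 :: b.2).map Prod.snd,
      (t.flatMap fun b => b.1 :: b.2).map Prod.snd, by simp⟩
  have hW : W = [] := by
    by_contra hne
    have hred : IsReduced (W.map Prod.snd) :=
      hinfix.infix ⟨[a.2], (b.1 :: b.2).map Prod.snd, by simp⟩
    exact inl_mul_universal_ne_one hred hne a.2.2 hone
  subst hW
  have hcoeff : a.2.2 = 1 := Coprod.inl_injective (by simpa [coarsen, universal] using hone)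
  exact (List.isChain_cons_cons.1 hinfix).1 hcoeff

theorem coprodMap_freeGroupMap_injective {v : κ → ι} (hv : Function.Injective v) :
    Function.Injective (Coprod.map (MonoidHom.id C) (FreeGroup.map v)) := by
  let retract : Coprod C (FreeGroup ι) →* Coprod C (FreeGroup κ) := Coprod.lift Coprod.inl
    (FreeGroup.lift (Function.extend v (fun k => Coprod.inr (FreeGroup.of k)) 1))
  have hretract : retract.comp (Coprod.map (MonoidHom.id C) (FreeGroup.map v)) = MonoidHom.id _ :=
    Coprod.hom_ext (MonoidHom.ext fun c => by simp [retract])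
      (FreeGroup.ext_hom _ _ fun k => by simp [retract, hv.extend_apply])
  exact Function.LeftInverse.injective (g := retract) (DFunLike.congr_fun hretract)

variable {n : ℕ} {W : LabelledEquation ι C}

theorem exists_solution_of_ne [DecidableEq ι] (IH : ShortEquationsSolvable n)
    (hC : LocallyIndicable C) (hW : IsCyclicallyReduced (W.map Prod.snd)) (hn : W.length ≤ n)
    {μ : ι} (hμ : ∃ a ∈ W, a.1 = μ) (hother : ∃ a ∈ W, a.1 ≠ μ) :
    ∃ (Q : Type) (_ : Group Q) (J : Coprod C (FreeGroup ι) →* Q) (y : Q), Function.Injective J ∧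
      eval (J.comp Coprod.inl) (Function.update (fun i => J (Coprod.inr (FreeGroup.of i))) μ y)
        W = 1 := by
  obtain ⟨a, haW, haμ⟩ := hμ
  obtain ⟨u, v, rfl⟩ := List.append_of_mem haW
  obtain ⟨s, L, hsL, hs, hL⟩ := exists_eq_append_flatMap (fun b : ι × ℤˣ × C => b.1 = μ) (v ++ u)
  have hrot : a :: v ++ u = ((a, s) :: L).flatMap fun b => b.1 :: b.2 := by simp [hsL]
  have hblocks : ∀ b ∈ (a, s) :: L, b.1.1 = μ ∧ ∀ a ∈ b.2, a.1 ≠ μ :=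
    List.forall_mem_cons.2 ⟨⟨haμ, hs⟩, hL⟩
  have hred : IsCyclicallyReduced (((a, s) :: L).map coarsen) := by
    rw [List.map_append] at hW
    have hrotated := hW.rotate
    rw [IsCyclicallyReduced, ← List.map_append, ← List.map_append, hrot, ← List.flatMap_append]
      at hrotated
    rw [IsCyclicallyReduced, ← List.map_append]
    exact isReduced_map_coarsen hrotated
  have hlen : (((a, s) :: L).map coarsen).length < n := by
    obtain ⟨c, hc, hcμ⟩ := hother
    have hcrot : c ∈ a :: v ++ u := by simp only [List.mem_append] at hc ⊢; exact hc.symm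
    rw [hrot, List.mem_flatMap] at hcrot
    obtain ⟨b, hb, hcb⟩ := hcrot
    have hcb2 : c ∈ b.2 := (List.mem_cons.1 hcb).resolve_left fun h => hcμ (h ▸ (hblocks b hb).1)
    have hlt := length_lt_length_flatMap ⟨b, hb, List.ne_nil_of_mem hcb2⟩
    rw [← hrot] at hlt
    simp only [List.length_append, List.length_map] at hlt hn ⊢
    omega
  obtain ⟨Q, _, J, y, hJ, hy⟩ :=
    IH _ (hC.coprod_freeGroup ι) _ (by simp) hred hlen
  refine ⟨Q, inferInstance, J, y, hJ, ?_⟩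
  rw [eval_map_coarsen J y hblocks, ← hrot, eval_append] at hy
  rw [eval_append, mul_eq_one_comm, hy]

/-- The Freiheitssatz for an equation in several unknowns. -/
theorem injective_mk'_comp_map (IH : ShortEquationsSolvable n) (hC : LocallyIndicable C)
    (hW : IsCyclicallyReduced (W.map Prod.snd)) (hn : W.length ≤ n) {μ : ι}
    (hμ : ∃ a ∈ W, a.1 = μ) (hother : ∃ a ∈ W, a.1 ≠ μ) {v : κ → ι} (hv : Function.Injective v)
    (hvμ : μ ∉ Set.range v) :
    Function.Injective ((QuotientGroup.mk' (Subgroup.normalClosure {W.universal})).comp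
      (Coprod.map (MonoidHom.id C) (FreeGroup.map v))) := by
  classical
  obtain ⟨Q, _, J, y, hJ, hy⟩ := exists_solution_of_ne IH hC hW hn hμ hother
  let Ψ : Coprod C (FreeGroup ι) →* Q := Coprod.lift (J.comp Coprod.inl)
    (FreeGroup.lift (Function.update (fun i => J (Coprod.inr (FreeGroup.of i))) μ y))
  have hker : Subgroup.normalClosure {W.universal} ≤ Ψ.ker := by
    refine Subgroup.normalClosure_le_normal (Set.singleton_subset_iff.2 ?_)
    simpa [MonoidHom.mem_ker, map_universal, Ψ] using hy
  have hΨ : Ψ.comp (Coprod.map (MonoidHom.id C) (FreeGroup.map v)) =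
      J.comp (Coprod.map (MonoidHom.id C) (FreeGroup.map v)) := by
    refine Coprod.hom_ext (MonoidHom.ext fun c => by simp [Ψ]) (FreeGroup.ext_hom _ _ fun k => ?_)
    have : v k ≠ μ := fun h => hvμ ⟨k, h⟩
    simp [Ψ, this]
  refine Function.Injective.of_comp (f := QuotientGroup.lift _ Ψ hker) ?_
  rw [← MonoidHom.coe_comp, ← MonoidHom.comp_assoc, QuotientGroup.lift_comp_mk', hΨ]
  exact hJ.comp (coprodMap_freeGroupMap_injective hv)

end LabelledEquation

/-! ### Unfolding an equation along a shift -/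

section Conjugates

variable {Q : Type*} [Group Q]

theorem eq_zpow_mul_mul_zpow_neg {t : Q} {X : ℤ → Q} {m M : ℤ}
    (h : ∀ k, m ≤ k → k < M → t * X k * t⁻¹ = X (k + 1)) {k : ℤ} (hm : m ≤ k) (hM : k ≤ M) :
    X k = t ^ k * (t ^ (-m) * X m * t ^ m) * t ^ (-k) := by
  induction k, hm using Int.leInduction with
  | base => group
  | succ k hk ih => rw [← h k hk (by omega), ih (by omega)]; group

end Conjugates

namespace LabelledEquation

open GroupEquation

variable {C : Type} [Group C] {n : ℕ} {W : LabelledEquation ℤ C}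

theorem injective_mk'_comp_map_Ico (IH : ShortEquationsSolvable n) (hC : LocallyIndicable C)
    (hW : IsCyclicallyReduced (W.map Prod.snd)) (hn : W.length ≤ n) {x y : ℤ × ℤˣ × C}
    (hx : x ∈ W) (hy : y ∈ W) (hxy : x.1 ≠ y.1) :
    Function.Injective ((QuotientGroup.mk' (Subgroup.normalClosure {W.universal})).comp
      (Coprod.map (MonoidHom.id C) (FreeGroup.map fun k : Set.Ico x.1 y.1 => (k : ℤ)))) ∧
    Function.Injective ((QuotientGroup.mk' (Subgroup.normalClosure {W.universal})).comp
      (Coprod.map (MonoidHom.id C) (FreeGroup.map fun k : Set.Ico x.1 y.1 => (k : ℤ) + 1))) := by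
  constructor
  · exact injective_mk'_comp_map IH hC hW hn ⟨y, hy, rfl⟩ ⟨x, hx, hxy⟩ Subtype.val_injective
      (by simp)
  · refine injective_mk'_comp_map IH hC hW hn ⟨x, hx, rfl⟩ ⟨y, hy, hxy.symm⟩
      (fun k l h => Subtype.ext (add_right_cancel h)) ?_
    rintro ⟨⟨k, hk, _⟩, h⟩
    simp only at h
    omega

/-- Let `m` and `M` be the extreme labels of `W`. In `⟨C, x m, …, x M | W⟩` the subgroups generated
by `C` together with `x m, …, x (M - 1)`, respectively `x (m + 1), …, x M`, are both free products;
the stable letter `t` of the HNN extension which identifies them centralises `C` and shifts the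
unknowns. -/
theorem exists_solution_of_shift (IH : ShortEquationsSolvable n) (hC : LocallyIndicable C)
    (hW : IsCyclicallyReduced (W.map Prod.snd)) (hn : W.length ≤ n)
    (hne : ∃ a ∈ W, ∃ b ∈ W, a.1 ≠ b.1) :
    ∃ (Q : Type) (_ : Group Q) (j : C →* Q) (t e : Q) (deg : Q →* Multiplicative ℤ),
      Function.Injective j ∧ (∀ c, Commute t (j c)) ∧ deg t = Multiplicative.ofAdd 1 ∧
        (∀ c, deg (j c) = 1) ∧ eval j (fun h => t ^ h * e * t ^ (-h)) W = 1 := by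
  obtain ⟨a, ha, b, hb, hab⟩ := hne
  obtain ⟨x, hx, hmin⟩ := Set.exists_min_image {x | x ∈ W} Prod.fst W.finite_toSet ⟨a, ha⟩
  obtain ⟨y, hy, hmax⟩ := Set.exists_max_image {x | x ∈ W} Prod.fst W.finite_toSet ⟨a, ha⟩
  have hxy : x.1 ≠ y.1 := fun h => hab <| by
    have := hmin a ha; have := hmax a ha; have := hmin b hb; have := hmax b hb; omega
  let π := QuotientGroup.mk' (Subgroup.normalClosure {W.universal})
  obtain ⟨hlower, hupper⟩ := injective_mk'_comp_map_Ico IH hC hW hn hx hy hxy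
  obtain ⟨Q, _, i, t, deg, hi, ht, hdegt, hdegi⟩ := exists_hnnExtension hlower hupper
  let j : C →* Q := i.comp (π.comp Coprod.inl)
  let X : ℤ → Q := fun h => i (π (Coprod.inr (FreeGroup.of h)))
  have hj : Function.Injective j := by
    convert hi.comp (hlower.comp Coprod.inl_injective) using 1
    ext c
    simp [j, π]
  have hcomm (c : C) : Commute t (j c) :=
    mul_inv_eq_iff_eq_mul.1 (by simpa [j, π] using ht (Coprod.inl c))
  have hX (k : ℤ) (hk : x.1 ≤ k) (hk' : k < y.1) : t * X k * t⁻¹ = X (k + 1) := by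
    simpa [X, π] using ht (Coprod.inr (FreeGroup.of ⟨k, hk, hk'⟩))
  refine ⟨Q, inferInstance, j, t, t ^ (-x.1) * X x.1 * t ^ x.1, deg, hj, hcomm, hdegt,
    fun c => hdegi _, ?_⟩
  have hπ : π W.universal = 1 :=
    (QuotientGroup.eq_one_iff _).2 (Subgroup.subset_normalClosure rfl)
  calc eval j (fun h => t ^ h * (t ^ (-x.1) * X x.1 * t ^ x.1) * t ^ (-h)) W
      = eval j X W :=
        eval_congr j fun a ha => (eq_zpow_mul_mul_zpow_neg hX (hmin a ha) (hmax a ha)).symm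
    _ = i (π W.universal) := (map_universal (i.comp π) W).symm
    _ = 1 := by rw [hπ, map_one]

end LabelledEquation

namespace GroupEquation

variable {C Q : Type} [Group C] [Group Q] (φ ψ : C →* Multiplicative ℤ) (p q : ℤ)

/-- The exponent of `t` in the letter `a` under the substitution `x ↦ x t ^ p`, `c ↦ c t ^ φ c`. -/
def weight (a : ℤˣ × C) : ℤ := a.1 * p + (φ a.2).toAdd

/-- The substitution `x ↦ x t ^ p`, `c ↦ c t ^ φ c` turns `t ^ h * w` into an equation in the
unknowns `x k = t ^ k x t ^ (-k)`, followed by a power of `t`. -/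
def unfold : ℤ → GroupEquation C → LabelledEquation ℤ C
  | _, [] => []
  | h, a :: w => (if a.1 = 1 then h else h - p, a) :: unfold (h + weight φ p a) w

theorem unfold_append (h : ℤ) (u v : GroupEquation C) :
    unfold φ p h (u ++ v) =
      unfold φ p h u ++ unfold φ p (h + (u.map (weight φ p)).sum) v := by
  induction u generalizing h with
  | nil => simp [unfold]
  | cons a u ih => simp [unfold, ih, add_assoc]

theorem map_snd_unfold (h : ℤ) (w : GroupEquation C) : (unfold φ p h w).map Prod.snd = w := by
  induction w generalizing h with
  | nil => rfl
  | cons a w ih => simp [unfold, ih]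

variable {φ} in
theorem zpow_mul_eval {j J : C →* Q} {t : Q} (hJ : ∀ c, J c = j c * t ^ (φ c).toAdd)
    (hcomm : ∀ c, Commute t (j c)) (e : Q) (h : ℤ) (w : GroupEquation C) :
    t ^ h * eval J (e * t ^ p) w =
      (unfold φ p h w).eval j (fun k => t ^ k * e * t ^ (-k)) *
        t ^ (h + (w.map (weight φ p)).sum) := by
  induction w generalizing h with
  | nil => simp [unfold]
  | cons a w ih =>
    obtain ⟨ε, c⟩ := a
    let k := if ε = 1 then h else h - p
    have hletter : t ^ h * ((e * t ^ p) ^ (ε : ℤ) * J c) =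
        (t ^ k * e * t ^ (-k)) ^ (ε : ℤ) * j c * t ^ (h + weight φ p (ε, c)) := by
      have hc (l : ℤ) : j c * t ^ l = t ^ l * j c := ((hcomm c).zpow_left l).symm.eq
      rw [hJ, hc, mul_assoc _ (j c), hc]
      rcases Int.units_eq_one_or ε with rfl | rfl
      · simp only [Units.val_one, zpow_one, ↓reduceIte, weight, one_mul, k]
        group
      · simp only [Units.val_neg, Units.val_one, neg_units_ne_self, ↓reduceIte, weight, neg_mul,
          one_mul, k]
        group
    rw [unfold, LabelledEquation.eval_cons, List.map_cons, List.sum_cons, ← add_assoc, mul_assoc,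
      ← ih, eval_cons, ← mul_assoc, hletter, mul_assoc]

/-- Twice the difference between the labels which `unfold φ p` gives to consecutive letters. -/
def labelStep (a b : ℤˣ × C) : ℤ := 2 * (φ a.2).toAdd + (a.1 + b.1) * p

theorem isChain_labelStep_of_forall_eq {h : ℤ} {w : GroupEquation C}
    (hw : ∀ a ∈ unfold φ p h w, ∀ b ∈ unfold φ p h w, a.1 = b.1) :
    w.IsChain fun a b => labelStep φ p a b = 0 := by
  induction w generalizing h with
  | nil => exact .nil
  | cons a w ih =>
    have hrest := ih fun b hb c hc => hw b (List.mem_cons_of_mem _ hb) c (List.mem_cons_of_mem _ hc)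
    cases w with
    | nil => exact .singleton a
    | cons b w =>
      refine .cons_cons ?_ hrest
      have hab := hw _ List.mem_cons_self _ (List.mem_cons_of_mem _ List.mem_cons_self)
      have hlabel (ε : ℤˣ) (k : ℤ) : 2 * (if ε = 1 then k else k - p) = 2 * k + (ε - 1) * p := by
        rcases Int.units_eq_one_or ε with rfl | rfl
        · simp
        · simp only [neg_units_ne_self, ↓reduceIte, Units.val_neg, Units.val_one]
          ring
      have hdouble := congrArg (2 * ·) hab
      simp only [hlabel, weight] at hdouble
      simp only [labelStep]
      linarith

variable {n : ℕ} {w : GroupEquation C}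

theorem solvable_of_unfold_ne (IH : ShortEquationsSolvable n) (hC : LocallyIndicable C)
    (hw : IsCyclicallyReduced w) (hn : w.length ≤ n) (hsum : (w.map (weight φ p)).sum = 0)
    (hne : ∃ a ∈ unfold φ p 0 w, ∃ b ∈ unfold φ p 0 w, a.1 ≠ b.1) : Solvable w := by
  obtain ⟨Q, _, j, t, e, deg, hj, hcomm, hdegt, hdegj, he⟩ :=
    LabelledEquation.exists_solution_of_shift IH hC (by rwa [map_snd_unfold])
      (by rwa [← List.length_map, map_snd_unfold]) hne
  let J : C →* Q :=
    { toFun c := j c * t ^ (φ c).toAdd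
      map_one' := by simp
      map_mul' c d := by
        have hd : t ^ (φ c).toAdd * j d = j d * t ^ (φ c).toAdd := (hcomm d).zpow_left _
        rw [map_mul, map_mul, toAdd_mul, zpow_add, mul_assoc, ← mul_assoc (j d), ← hd]
        simp only [mul_assoc] }
  refine ⟨Q, inferInstance, J, e * t ^ p, ?_, ?_⟩
  · refine (injective_iff_map_eq_one J).2 fun c hc => ?_
    have hφ : φ c = 1 := by simpa [J, hdegj, hdegt, ← ofAdd_zsmul] using congrArg deg hc
    exact (injective_iff_map_eq_one j).1 hj c (by simpa [J, hφ] using hc)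
  · have hJe := zpow_mul_eval p (J := J) (fun c => rfl) hcomm e 0 w
    rwa [he, hsum, add_zero, zpow_zero, one_mul, mul_one] at hJe

theorem solvable_or_isChain_labelStep (IH : ShortEquationsSolvable n) (hC : LocallyIndicable C)
    (hw : IsCyclicallyReduced w) (hn : w.length ≤ n) (hsum : (w.map (weight φ p)).sum = 0) :
    Solvable w ∨ (w ++ w).IsChain fun a b => labelStep φ p a b = 0 := by
  refine or_iff_not_imp_left.2 fun hsol => isChain_labelStep_of_forall_eq (h := 0) φ p ?_
  rw [unfold_append, hsum, add_zero]
  by_contra! hne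
  exact hsol (solvable_of_unfold_ne φ p IH hC hw hn hsum (by simpa using hne))

variable {φ ψ p q} in
/-- Some nontrivial combination of two pairs `(φ, p)` and `(ψ, q)` gives `w` total weight zero. -/
theorem solvable_of_independent (IH : ShortEquationsSolvable n) (hC : LocallyIndicable C)
    (hw : IsCyclicallyReduced w) (hn : w.length ≤ n)
    (hind : ∀ m l : ℤ, ((w ++ w).IsChain fun a b =>
      m * labelStep φ p a b + l * labelStep ψ q a b = 0) → m = 0 ∧ l = 0) : Solvable w := by
  have key (m l : ℤ) (hml : ¬ (m = 0 ∧ l = 0))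
      (hsum : m * (w.map (weight φ p)).sum + l * (w.map (weight ψ q)).sum = 0) : Solvable w := by
    have hweight : weight (φ ^ m * ψ ^ l) (m * p + l * q) =
        fun a => m * weight φ p a + l * weight ψ q a := by
      funext a
      simp only [weight, MonoidHom.mul_apply, MonoidHom.zpow_apply, toAdd_mul, toAdd_zpow,
        smul_eq_mul]
      ring
    have hstep (a b : ℤˣ × C) : labelStep (φ ^ m * ψ ^ l) (m * p + l * q) a b =
        m * labelStep φ p a b + l * labelStep ψ q a b := by
      simp only [labelStep, MonoidHom.mul_apply, MonoidHom.zpow_apply, toAdd_mul, toAdd_zpow,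
        smul_eq_mul]
      ring
    refine (solvable_or_isChain_labelStep (φ ^ m * ψ ^ l) (m * p + l * q) IH hC hw hn
      ?_).resolve_right fun hchain => hml (hind m l ?_)
    · simpa [hweight, List.sum_map_add, List.sum_map_mul_left] using hsum
    · simpa only [hstep] using hchain
  by_cases hφ : (w.map (weight φ p)).sum = 0
  · exact key 1 0 (by simp) (by simp [hφ])
  · exact key (w.map (weight ψ q)).sum (-(w.map (weight φ p)).sum) (by simp [hφ]) (by ring)

end GroupEquation

/-! ### Two consecutive letters of the same sign -/

namespace GroupEquation

variable {C Q : Type} [Group C] [Group Q] {w : GroupEquation C}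

theorem exists_map_subtype_eq {D : Subgroup C} (hD : ∀ a ∈ w, a.2 ∈ D) :
    ∃ w₀ : GroupEquation D, w₀.map (Prod.map id D.subtype) = w := by
  have : w ∈ Set.range (List.map (Prod.map (id : ℤˣ → ℤˣ) D.subtype)) := by
    rw [Set.range_list_map]
    exact fun a ha => ⟨(a.1, ⟨a.2, hD a ha⟩), rfl⟩
  exact this

theorem isCyclicallyReduced_map_iff {D : Type} [Group D] {i : D →* C}
    (hi : Function.Injective i) {w : GroupEquation D} :
    IsCyclicallyReduced (w.map (Prod.map id i)) ↔ IsCyclicallyReduced w := by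
  simp [IsCyclicallyReduced, IsReduced, ← List.map_append, List.isChain_map,
    map_eq_one_iff i hi]

section Twist

variable (k : C) (s : ℤˣ)

/-- The factor `leftFactor k ε` in `(x k) ^ ε = leftFactor k ε * x ^ ε * rightFactor k ε`. -/
def leftFactor (ε : ℤˣ) : C := if ε = 1 then 1 else k⁻¹

/-- The factor `rightFactor k ε` in `(x k) ^ ε = leftFactor k ε * x ^ ε * rightFactor k ε`. -/
def rightFactor (ε : ℤˣ) : C := if ε = 1 then k else 1

theorem rightFactor_mul_leftFactor_neg (ε : ℤˣ) : rightFactor k ε * leftFactor k (-ε) = 1 := by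
  rcases Int.units_eq_one_or ε with rfl | rfl <;> simp [leftFactor, rightFactor]

/-- The sign of the first letter of `w`, or `s` if there is none. -/
def headSign (w : GroupEquation C) : ℤˣ := (w.head?.map Prod.fst).getD s

/-- The equation obtained from `w` by the substitution `x ↦ x k`, where `s` is the sign of the
letter following `w` and left factors are moved to the end of the preceding coefficient. -/
def twist : GroupEquation C → GroupEquation C
  | [] => []
  | a :: w => (a.1, rightFactor k a.1 * a.2 * leftFactor k (headSign s w)) :: twist w

theorem twist_append (u v : GroupEquation C) :
    twist k s (u ++ v) = twist k (headSign s v) u ++ twist k s v := by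
  induction u with
  | nil => rfl
  | cons a u ih => cases u <;> simp_all [twist, headSign]

theorem length_twist (w : GroupEquation C) : (twist k s w).length = w.length := by
  induction w with
  | nil => rfl
  | cons a w ih => simp [twist, ih]

theorem twist_append_self (a : ℤˣ × C) (w : GroupEquation C) :
    twist k a.1 (a :: w ++ a :: w) = twist k a.1 (a :: w) ++ twist k a.1 (a :: w) :=
  twist_append k a.1 (a :: w) (a :: w)

theorem isReduced_twist {w : GroupEquation C} (hw : IsReduced w) : IsReduced (twist k s w) := by
  induction w with
  | nil => exact .nil
  | cons a w ih =>
    cases w with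
    | nil => exact .singleton _
    | cons b w =>
      obtain ⟨hab, hw⟩ := List.isChain_cons_cons.1 hw
      refine .cons_cons (fun hone => ?_) (ih hw)
      by_contra hne
      have hb : headSign s (b :: w) = -a.1 := Int.units_ne_iff_eq_neg.1 (Ne.symm hne)
      have hconj : rightFactor k a.1 * a.2 * (rightFactor k a.1)⁻¹ = 1 := by
        rwa [← eq_inv_of_mul_eq_one_right (rightFactor_mul_leftFactor_neg k a.1), ← hb]
      exact hne (hab (conj_eq_one_iff.1 hconj))

theorem eval_mul_leftFactor (j : C →* Q) (e : Q) (w : GroupEquation C) :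
    eval j (e * j k) w * j (leftFactor k s) =
      j (leftFactor k (headSign s w)) * eval j e (twist k s w) := by
  induction w with
  | nil => simp [twist, headSign]
  | cons a w ih =>
    have hpow : (e * j k) ^ (a.1 : ℤ) =
        j (leftFactor k a.1) * e ^ (a.1 : ℤ) * j (rightFactor k a.1) := by
      rcases Int.units_eq_one_or a.1 with h | h <;> simp [h, leftFactor, rightFactor]
    simp only [eval_cons, twist, map_mul, mul_assoc, ih, hpow]
    rfl

theorem Solvable.of_twist {a : ℤˣ × C} {w : GroupEquation C}
    (h : Solvable (twist k a.1 (a :: w))) : Solvable (a :: w) := by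
  obtain ⟨Q, _, j, e, hj, he⟩ := h
  refine ⟨Q, inferInstance, j, e * j k, hj, ?_⟩
  have htwist := eval_mul_leftFactor k a.1 j e (a :: w)
  rw [he, mul_one] at htwist
  exact mul_eq_right.1 htwist

theorem not_isChain_twist {w s₁ s₂ : GroupEquation C} {a b : ℤˣ × C} (hw : w = s₁ ++ a :: b :: s₂)
    (hab : a.1 = b.1) :
    ¬ (twist (a.2 ^ (-(a.1 : ℤ))) s w).IsChain fun a b => a.2 = 1 → a.1 ≠ b.1 := by
  subst hw
  intro h
  rw [twist_append] at h
  refine (List.isChain_cons_cons.1 h.right_of_append).1 ?_ hab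
  have hsign : headSign s (b :: s₂) = a.1 := hab.symm
  rw [hsign]
  rcases Int.units_eq_one_or a.1 with ha | ha <;> simp [ha, leftFactor, rightFactor]

end Twist

variable {n : ℕ}

theorem solvable_of_not_isChain_of_hom (IH : ShortEquationsSolvable n)
    (hC : LocallyIndicable C) (hw : IsCyclicallyReduced w) (hn : w.length ≤ n)
    (hsame : ¬ (w ++ w).IsChain fun a b => a.2 = 1 → a.1 ≠ b.1) (α : C →* Multiplicative ℤ)
    (hα : ∃ a ∈ w, α a.2 ≠ 1) : Solvable w := by
  refine solvable_of_independent (φ := α) (p := 0) (ψ := 1) (q := 1) IH hC hw hn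
    fun m l hchain => ?_
  have hl : l = 0 := by
    by_contra hl
    refine hsame (hchain.imp fun a b hab hone hsign => hl ?_)
    rcases Int.units_eq_one_or b.1 with hb | hb <;> simpa [labelStep, hone, hsign, hb] using hab
  obtain ⟨a, ha, hαa⟩ := hα
  obtain ⟨b, -, hab⟩ := exists_rel_of_isChain_append_self hchain ha
  exact ⟨by simpa [labelStep, hl, hαa] using hab, hl⟩

theorem solvable_of_not_isChain_coeff (IH : ShortEquationsSolvable n) (hC : LocallyIndicable C)
    (hw : IsCyclicallyReduced w) (hn : w.length ≤ n)
    (hsame : ¬ (w ++ w).IsChain fun a b => a.2 = 1 → a.1 ≠ b.1) : Solvable w := by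
  by_cases hone : ∀ a ∈ w, a.2 = 1
  · refine ⟨C, inferInstance, MonoidHom.id C, 1, Function.injective_id, List.prod_eq_one ?_⟩
    simpa using fun c ε h => hone (ε, c) h
  · push Not at hone
    obtain ⟨a, haw, ha⟩ := hone
    let S : Set C := {c | c ∈ w.map Prod.snd}
    obtain ⟨α, y, hyS, hy⟩ := hC.exists_hom_closure_ne_one (S := S) (List.finite_toSet _)
      ⟨a.2, List.mem_map_of_mem haw, ha⟩
    obtain ⟨w₀, hw₀⟩ := exists_map_subtype_eq (w := w) (D := Subgroup.closure S)
      fun a ha => Subgroup.subset_closure (List.mem_map_of_mem ha)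
    have hinj := (Subgroup.closure S).subtype_injective
    have hα : ∃ b ∈ w₀, α b.2 ≠ 1 := by
      obtain ⟨c, hc, hcy⟩ := List.mem_map.1 hyS
      rw [← hw₀] at hc
      obtain ⟨b, hb, rfl⟩ := List.mem_map.1 hc
      exact ⟨b, hb, by rwa [Subtype.ext hcy]⟩
    rw [← hw₀] at hw hn hsame ⊢
    refine (solvable_of_not_isChain_of_hom IH (hC.subgroup _) ?_ ?_ ?_ α hα).map_of_injective hinj
    · exact (isCyclicallyReduced_map_iff hinj).1 hw
    · simpa using hn
    · simpa [← List.map_append, List.isChain_map] using hsame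

theorem solvable_of_not_isChain_sign (IH : ShortEquationsSolvable n) (hC : LocallyIndicable C)
    (hw : IsCyclicallyReduced w) (hn : w.length ≤ n)
    (hsame : ¬ (w ++ w).IsChain fun a b => a.1 ≠ b.1) : Solvable w := by
  cases w with
  | nil => exact absurd .nil hsame
  | cons c w =>
    obtain ⟨a, b, s₁, s₂, heq, hab⟩ : ∃ a b s₁ s₂, c :: w ++ c :: w = s₁ ++ a :: b :: s₂ ∧
        a.1 = b.1 := by
      simpa [List.isChain_iff_forall_rel_of_append_cons_cons] using hsame
    refine Solvable.of_twist (a.2 ^ (-(a.1 : ℤ)))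
      (solvable_of_not_isChain_coeff IH hC ?_ ((length_twist _ _ _).trans_le hn) ?_)
    · rw [IsCyclicallyReduced, ← twist_append_self]
      exact isReduced_twist _ _ hw
    · rw [← twist_append_self]
      exact not_isChain_twist _ heq hab

end GroupEquation

/-! ### Alternating signs -/

/-- `A` and `B` embed in a common group in which the product of the `a * b`, for `(a, b)` in `L`,
is trivial. -/
def FactorsEmbed {A B : Type} [Group A] [Group B] (L : List (A × B)) : Prop :=
  ∃ (Q : Type) (_ : Group Q) (α : A →* Q) (β : B →* Q), Function.Injective α ∧
    Function.Injective β ∧ (L.map fun x => α x.1 * β x.2).prod = 1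

namespace GroupEquation

variable {A B C Q : Type} [Group A] [Group B] [Group Q]

/-- The product of the `(x ^ s * a * x ^ (-s)) * b`, for `(a, b)` in `L`. -/
def alternatingWord (s : ℤˣ) (L : List (C × C)) : GroupEquation C :=
  L.flatMap fun x => [(s, x.1), (-s, x.2)]

theorem length_alternatingWord (s : ℤˣ) (L : List (C × C)) :
    (alternatingWord s L).length = 2 * L.length := by
  simp [alternatingWord, List.length_flatMap, mul_comm]

theorem mem_alternatingWord {s : ℤˣ} {L : List (C × C)} {a : ℤˣ × C} :
    a ∈ alternatingWord s L ↔ ∃ x ∈ L, a = (s, x.1) ∨ a = (-s, x.2) := by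
  simp [alternatingWord]

theorem exists_eq_alternatingWord {s : ℤˣ} :
    ∀ w : GroupEquation C, (-s :: w.map Prod.fst ++ [s]).IsChain (· ≠ ·) →
      ∃ L, w = alternatingWord s L
  | [], _ => ⟨[], rfl⟩
  | [a], h => by
    have h' : -s ≠ a.1 ∧ a.1 ≠ s := by simpa using h
    exact absurd (Int.units_ne_iff_eq_neg.1 h'.2) h'.1.symm
  | (u, c) :: (v, d) :: w, h => by
    simp only [List.map_cons, List.cons_append, List.isChain_cons_cons] at h
    obtain ⟨hu, huv, hw⟩ := h
    obtain rfl : u = s := by simpa using Int.units_ne_iff_eq_neg.1 hu.symm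
    obtain rfl : v = -u := Int.units_ne_iff_eq_neg.1 huv.symm
    obtain ⟨L, rfl⟩ := exists_eq_alternatingWord w hw
    exact ⟨(c, d) :: L, rfl⟩

theorem exists_eq_alternatingWord_of_isChain {w : GroupEquation C}
    (h : (w ++ w).IsChain fun a b => a.1 ≠ b.1) : ∃ s L, w = alternatingWord s L := by
  cases w with
  | nil => exact ⟨1, [], rfl⟩
  | cons a w =>
    refine ⟨a.1, exists_eq_alternatingWord (a :: w) ?_⟩
    have hsigns : (((a :: w) ++ (a :: w)).map Prod.fst).IsChain (· ≠ ·) := (List.isChain_map _).2 h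
    have hprefix : (a.1 :: (w.map Prod.fst ++ [a.1])).IsChain (· ≠ ·) :=
      hsigns.prefix ⟨w.map Prod.fst, by simp⟩
    exact hprefix.cons_cons (neg_units_ne_self a.1)

variable [Group C]

theorem eval_alternatingWord (j : C →* Q) (e : Q) (s : ℤˣ) (L : List (C × C)) :
    eval j e (alternatingWord s L) =
      (L.map fun x => e ^ (s : ℤ) * j x.1 * (e ^ (s : ℤ))⁻¹ * j x.2).prod := by
  induction L with
  | nil => rfl
  | cons x L ih =>
    rw [List.map_cons, List.prod_cons, ← ih]
    simp [alternatingWord, mul_assoc]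

/-- `alternatingWord` with coefficients taken alternately from the two factors of `A ∗ B`. -/
abbrev coprodWord (L : List (A × B)) : GroupEquation (Coprod A B) :=
  alternatingWord 1 (L.map (Prod.map Coprod.inl Coprod.inr))

theorem factorsEmbed_of_solvable_coprodWord {L : List (A × B)} (h : Solvable (coprodWord L)) :
    FactorsEmbed L := by
  obtain ⟨Q, _, j, e, hj, he⟩ := h
  refine ⟨Q, inferInstance, (MulAut.conj e).toMonoidHom.comp (j.comp Coprod.inl),
    j.comp Coprod.inr, (MulAut.conj e).injective.comp (hj.comp Coprod.inl_injective),
    hj.comp Coprod.inr_injective, ?_⟩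
  rw [eval_alternatingWord] at he
  simpa [Function.comp_def] using he

theorem isCyclicallyReduced_coprodWord {L : List (A × B)} (hne : ∀ x ∈ L, x.1 ≠ 1 ∧ x.2 ≠ 1) :
    IsCyclicallyReduced (coprodWord L) := by
  refine isCyclicallyReduced_of_forall_ne_one fun a ha => ?_
  obtain ⟨y, hy, hay⟩ := mem_alternatingWord.1 ha
  obtain ⟨x, hx, rfl⟩ := List.mem_map.1 hy
  rcases hay with rfl | rfl
  · exact (map_ne_one_iff _ Coprod.inl_injective).2 (hne x hx).1
  · exact (map_ne_one_iff _ Coprod.inr_injective).2 (hne x hx).2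

/-- Amalgamate the group in which the factors embed with `C` over `B`, then conjugate the copy of
`A` in `C` to the other one. -/
theorem solvable_of_factorsEmbed {s : ℤˣ} {L : List (A × B)} (h : FactorsEmbed L)
    {f : A →* C} {g : B →* C} (hf : Function.Injective f) (hg : Function.Injective g) :
    Solvable (alternatingWord s (L.map (Prod.map f g))) := by
  obtain ⟨Q, _, α, β, hα, hβ, hprod⟩ := h
  obtain ⟨P, _, i, j, hi, hj, hij⟩ := exists_amalgam hβ hg
  obtain ⟨R, _, k, t, -, hk, ht, -⟩ := exists_hnnExtension (f := j.comp f) (g := i.comp α)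
    (hj.comp hf) (hi.comp hα)
  refine ⟨R, inferInstance, k.comp j, t ^ (s : ℤ), hk.comp hj, ?_⟩
  have hs : (t ^ (s : ℤ)) ^ (s : ℤ) = t := by
    rcases Int.units_eq_one_or s with rfl | rfl <;> simp
  have hβj (b : B) : j (g b) = i (β b) := (DFunLike.congr_fun hij b).symm
  have ht' (a : A) : t * k (j (f a)) * t⁻¹ = k (i (α a)) := ht a
  have := congrArg (k.comp i) hprod
  rw [eval_alternatingWord]
  simpa [hs, Function.comp_def, hβj, ht', map_list_prod] using this

variable {n : ℕ}

theorem factorsEmbed_of_hom_ne_one (IH : ShortEquationsSolvable n)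
    (hA : LocallyIndicable A) (hB : LocallyIndicable B) {L : List (A × B)}
    (hne : ∀ x ∈ L, x.1 ≠ 1 ∧ x.2 ≠ 1) {α : A →* Multiplicative ℤ} {β : B →* Multiplicative ℤ}
    (hα : ∃ x ∈ L, α x.1 ≠ 1) (hβ : ∃ x ∈ L, β x.2 ≠ 1) (hn : 2 * L.length ≤ n) :
    FactorsEmbed L := by
  refine factorsEmbed_of_solvable_coprodWord (solvable_of_independent (φ := Coprod.lift α 1)
    (p := 0) (ψ := Coprod.lift 1 β) (q := 0) IH (hA.coprod hB)
    (isCyclicallyReduced_coprodWord hne) ?_ fun m l hchain => ?_)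
  · simpa [length_alternatingWord] using hn
  · obtain ⟨x, hx, hαx⟩ := hα
    obtain ⟨y, hy, hβy⟩ := hβ
    obtain ⟨_, -, hm⟩ := exists_rel_of_isChain_append_self hchain
      (mem_alternatingWord.2 ⟨_, List.mem_map_of_mem hx, .inl rfl⟩)
    obtain ⟨_, -, hl⟩ := exists_rel_of_isChain_append_self hchain
      (mem_alternatingWord.2 ⟨_, List.mem_map_of_mem hy, .inr rfl⟩)
    exact ⟨by simpa [labelStep, hαx] using hm, by simpa [labelStep, hβy] using hl⟩

theorem exists_map_subtype_prodMap_eq {D E : Subgroup C} {L : List (C × C)}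
    (h : ∀ x ∈ L, x.1 ∈ D ∧ x.2 ∈ E) :
    ∃ L₀ : List (D × E), L₀.map (Prod.map D.subtype E.subtype) = L := by
  have : L ∈ Set.range (List.map (Prod.map D.subtype E.subtype)) := by
    rw [Set.range_list_map]
    exact fun x hx => ⟨(⟨x.1, (h x hx).1⟩, ⟨x.2, (h x hx).2⟩), rfl⟩
  exact this

theorem solvable_alternatingWord (IH : ShortEquationsSolvable n) (hC : LocallyIndicable C)
    (s : ℤˣ) {L : List (C × C)} (hL : L ≠ []) (hne : ∀ x ∈ L, x.1 ≠ 1 ∧ x.2 ≠ 1)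
    (hn : 2 * L.length ≤ n) : Solvable (alternatingWord s L) := by
  obtain ⟨x, hx⟩ := List.exists_mem_of_ne_nil L hL
  let S : Set C := {c | c ∈ L.map Prod.fst}
  let T : Set C := {c | c ∈ L.map Prod.snd}
  obtain ⟨α, y, hyS, hy⟩ := hC.exists_hom_closure_ne_one (S := S) (List.finite_toSet _)
    ⟨x.1, List.mem_map_of_mem hx, (hne x hx).1⟩
  obtain ⟨β, z, hzT, hz⟩ := hC.exists_hom_closure_ne_one (S := T) (List.finite_toSet _)
    ⟨x.2, List.mem_map_of_mem hx, (hne x hx).2⟩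
  obtain ⟨L₀, hL₀⟩ := exists_map_subtype_prodMap_eq (L := L) (D := Subgroup.closure S)
    (E := Subgroup.closure T) fun x hx => ⟨Subgroup.subset_closure (List.mem_map_of_mem hx),
      Subgroup.subset_closure (List.mem_map_of_mem hx)⟩
  have hne₀ (x) (hx : x ∈ L₀) : x.1 ≠ 1 ∧ x.2 ≠ 1 := by
    obtain ⟨h₁, h₂⟩ := hne _ (hL₀ ▸ List.mem_map_of_mem hx)
    exact ⟨fun h => h₁ (congrArg Subtype.val h), fun h => h₂ (congrArg Subtype.val h)⟩
  have hα : ∃ x ∈ L₀, α x.1 ≠ 1 := by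
    obtain ⟨_, hx', hxy⟩ := List.mem_map.1 hyS
    obtain ⟨x, hx, rfl⟩ := List.mem_map.1 (hL₀ ▸ hx')
    exact ⟨x, hx, by rwa [Subtype.ext hxy]⟩
  have hβ : ∃ x ∈ L₀, β x.2 ≠ 1 := by
    obtain ⟨_, hx', hxz⟩ := List.mem_map.1 hzT
    obtain ⟨x, hx, rfl⟩ := List.mem_map.1 (hL₀ ▸ hx')
    exact ⟨x, hx, by rwa [Subtype.ext hxz]⟩
  have hn₀ : 2 * L₀.length ≤ n := by rwa [← hL₀, List.length_map] at hn
  rw [← hL₀]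
  exact solvable_of_factorsEmbed
    (factorsEmbed_of_hom_ne_one IH (hC.subgroup _) (hC.subgroup _) hne₀ hα hβ hn₀)
    (Subgroup.subtype_injective _) (Subgroup.subtype_injective _)

theorem solvable_of_isChain_sign (IH : ShortEquationsSolvable n) (hC : LocallyIndicable C)
    {w : GroupEquation C} (hne : w ≠ []) (hw : IsCyclicallyReduced w) (hn : w.length ≤ n)
    (halt : (w ++ w).IsChain fun a b => a.1 ≠ b.1) : Solvable w := by
  have hcoeff : ∀ a ∈ w, a.2 ≠ 1 := fun a ha hone => by
    have hboth : (w ++ w).IsChain fun a b => (a.2 = 1 → a.1 = b.1) ∧ a.1 ≠ b.1 := by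
      simp only [IsCyclicallyReduced, IsReduced,
        List.isChain_iff_forall_rel_of_append_cons_cons] at hw halt ⊢
      exact fun _ _ _ _ h => ⟨hw h, halt h⟩
    obtain ⟨b, -, hab, hab'⟩ := exists_rel_of_isChain_append_self hboth ha
    exact hab' (hab hone)
  obtain ⟨s, L, rfl⟩ := exists_eq_alternatingWord_of_isChain halt
  refine solvable_alternatingWord IH hC s ?_ (fun x hx => ⟨?_, ?_⟩)
    ((length_alternatingWord s L).symm.trans_le hn)
  · rintro rfl
    exact hne rfl
  · exact hcoeff (s, x.1) (mem_alternatingWord.2 ⟨x, hx, .inl rfl⟩)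
  · exact hcoeff (-s, x.2) (mem_alternatingWord.2 ⟨x, hx, .inr rfl⟩)

theorem solvable_of_locallyIndicable (hC : LocallyIndicable C) {w : GroupEquation C}
    (hne : w ≠ []) (hw : IsCyclicallyReduced w) : Solvable w := by
  have hshort (n : ℕ) : ShortEquationsSolvable n := by
    induction n with
    | zero => exact fun C _ _ w _ _ hlt => absurd hlt (Nat.not_lt_zero _)
    | succ n IH =>
      intro C _ hC w hne hw hlt
      have hn : w.length ≤ n := Nat.le_of_lt_succ hlt
      by_cases halt : (w ++ w).IsChain fun a b => a.1 ≠ b.1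
      · exact solvable_of_isChain_sign IH hC hne hw hn halt
      · exact solvable_of_not_isChain_sign IH hC hw hn halt
  exact hshort (w.length + 1) C hC w hne hw (Nat.lt_succ_self _)

end GroupEquation

section FreeProducts

open GroupEquation

variable {A B : Type} [Group A] [Group B]

theorem factorsEmbed_of_locallyIndicable (hA : LocallyIndicable A) (hB : LocallyIndicable B)
    {L : List (A × B)} (hL : L ≠ []) (hne : ∀ x ∈ L, x.1 ≠ 1 ∧ x.2 ≠ 1) : FactorsEmbed L := by
  have hL' : coprodWord L ≠ [] := List.ne_nil_of_length_pos <| by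
    simpa [length_alternatingWord] using List.length_pos_iff.2 hL
  exact factorsEmbed_of_solvable_coprodWord (solvable_of_locallyIndicable (hA.coprod hB) hL'
    (isCyclicallyReduced_coprodWord hne))

theorem injective_inl_and_inr_of_lift_eq_one {Q : Type} [Group Q] {r : Coprod A B} {α : A →* Q}
    {β : B →* Q} (hα : Function.Injective α) (hβ : Function.Injective β)
    (hr : Coprod.lift α β r = 1) :
    Function.Injective
      ((QuotientGroup.mk' (Subgroup.normalClosure {r})).comp (Coprod.inl : A →* Coprod A B)) ∧
    Function.Injective
      ((QuotientGroup.mk' (Subgroup.normalClosure {r})).comp (Coprod.inr : B →* Coprod A B)) := by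
  have hker : Subgroup.normalClosure {r} ≤ (Coprod.lift α β).ker :=
    Subgroup.normalClosure_le_normal (Set.singleton_subset_iff.2 (MonoidHom.mem_ker.2 hr))
  let ψ := QuotientGroup.lift _ (Coprod.lift α β) hker
  constructor <;> refine Function.Injective.of_comp (f := ψ) ?_ <;>
    rw [← MonoidHom.coe_comp, ← MonoidHom.comp_assoc, QuotientGroup.lift_comp_mk']
  · rwa [Coprod.lift_comp_inl]
  · rwa [Coprod.lift_comp_inr]

end FreeProducts

/-- **Freiheitssatz for locally indicable groups** (Howie, Brodskii, Short). -/
theorem freiheitssatz_locally_indicable {A B : Type} [Group A] [Group B]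
    (hA : LocallyIndicable A) (hB : LocallyIndicable B)
    (r : Coprod A B) (hr : CyclicallyReducedGE2 r) :
    Function.Injective
      ((QuotientGroup.mk' (Subgroup.normalClosure {r})).comp (Coprod.inl : A →* Coprod A B)) ∧
    Function.Injective
      ((QuotientGroup.mk' (Subgroup.normalClosure {r})).comp (Coprod.inr : B →* Coprod A B)) := by
  obtain ⟨n, hn, ⟨a, b, ha, hb, rfl⟩ | ⟨a, b, ha, hb, rfl⟩⟩ := hr
  · obtain ⟨Q, _, α, β, hα, hβ, hprod⟩ := factorsEmbed_of_locallyIndicable hA hB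
      (L := List.ofFn fun i => (a i, b i)) (by simpa using hn.ne') (by simp [ha, hb])
    refine injective_inl_and_inr_of_lift_eq_one hα hβ ?_
    simpa [map_list_prod, List.map_ofFn, Function.comp_def] using hprod
  · obtain ⟨Q, _, β, α, hβ, hα, hprod⟩ := factorsEmbed_of_locallyIndicable hB hA
      (L := List.ofFn fun i => (b i, a i)) (by simpa using hn.ne') (by simp [ha, hb])
    refine injective_inl_and_inr_of_lift_eq_one hα hβ ?_
    simpa [map_list_prod, List.map_ofFn, Function.comp_def] using hprod
end
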